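/- arXiv:math/9907213 — 3 statements merged into one kernel-verified Lean document; each statement's English description precedes it below -/
import Mathlib

section
/- Let l be a monic irreducible polynomial of A such that φ has good reduction at the primes of L lying over l and l is unramified in the maximal separable subextension L_s/k. The map H_{l,Γ} × Γ → Λ_l^φ given by (σ, a) ↦ ⟨σ, a⟩ = σα − α (where φ_l(α) = a) is A-bilinear; its kernel on the left is {1} and its kernel on the right is Γ ∩ φ_l(L_l). -/
open Polynomial IntermediateField

set_option synthInstance.maxHeartbeats 1000000
set_option maxHeartbeats 1000000

/-- `φ` is a rank one Drinfeld `A = 𝔽_q[T]`-module defined over the finite extension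
`L` of `k = 𝔽_q(T)` (viewed as an `A`-field of generic characteristic): a ring
homomorphism `A → End_{𝔽_q}(k̄, +)` with `φ_T(X) = TX + aX^q` for some nonzero
`a ∈ L`, and `φ_c(X) = cX` for constants `c ∈ 𝔽_q`. -/
def IsDrinfeldRankOne {Fq : Type} [Field Fq] [Fintype Fq]
    (L : IntermediateField (RatFunc Fq) (AlgebraicClosure (RatFunc Fq)))
    (φ : Polynomial Fq →+* AddMonoid.End (AlgebraicClosure (RatFunc Fq))) : Prop :=
  ∃ a : AlgebraicClosure (RatFunc Fq), a ∈ L ∧ a ≠ 0 ∧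
    (∀ α, φ X α = algebraMap (RatFunc Fq) (AlgebraicClosure (RatFunc Fq)) RatFunc.X * α
        + a * α ^ Fintype.card Fq) ∧
    (∀ (c : Fq) (α), φ (C c) α
        = algebraMap (RatFunc Fq) (AlgebraicClosure (RatFunc Fq)) (RatFunc.C c) * α)

/-- An automorphism `τ ∈ Gal(E/L)` fixes the `l`-torsion points `Λ_l^φ` pointwise; when
`E ⊇ L_l = L(Λ_l^φ)` this says exactly `τ ∈ Gal(E/L_l)`. -/
def FixesTorsionD {Fq : Type} [Field Fq] [Fintype Fq]
    {L : IntermediateField (RatFunc Fq) (AlgebraicClosure (RatFunc Fq))}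
    (φ : Polynomial Fq →+* AddMonoid.End (AlgebraicClosure (RatFunc Fq)))
    (l : Polynomial Fq)
    {E : IntermediateField (↥L) (AlgebraicClosure (RatFunc Fq))}
    (τ : ↥E ≃ₐ[↥L] ↥E) : Prop :=
  ∀ x : ↥E, φ l (x : AlgebraicClosure (RatFunc Fq)) = 0 → τ x = x

/-- An automorphism `s ∈ Gal(E/L)` is an extension of `σ_u ∈ Gal(L_l/L)`, i.e. it acts
on the `l`-torsion points `Λ_l^φ ⊆ E` by `λ ↦ φ_u(λ)`. -/
def ExtendsSigmaD {Fq : Type} [Field Fq] [Fintype Fq]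
    {L : IntermediateField (RatFunc Fq) (AlgebraicClosure (RatFunc Fq))}
    (φ : Polynomial Fq →+* AddMonoid.End (AlgebraicClosure (RatFunc Fq)))
    (l : Polynomial Fq)
    {E : IntermediateField (↥L) (AlgebraicClosure (RatFunc Fq))}
    (s : ↥E ≃ₐ[↥L] ↥E) (u : Polynomial Fq) : Prop :=
  ∀ x : ↥E, φ l (x : AlgebraicClosure (RatFunc Fq)) = 0 →
    ((s x : AlgebraicClosure (RatFunc Fq))) = φ u (x : AlgebraicClosure (RatFunc Fq))

/-- `c` is the natural `A`-action on `Gal(E/L_l)`, defined via decompositions: for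
`f ≡ f_1 + ⋯ + f_n (mod l)` with all `gcd(f_i, l) = 1` and extensions `s_i` of
`σ_{f_i} ∈ Gal(L_l/L)`, one has `c f τ = Σ_i s_i ∘ τ ∘ s_i⁻¹` (conjugation action). -/
def IsDecompConjActionD {Fq : Type} [Field Fq] [Fintype Fq]
    {L : IntermediateField (RatFunc Fq) (AlgebraicClosure (RatFunc Fq))}
    (φ : Polynomial Fq →+* AddMonoid.End (AlgebraicClosure (RatFunc Fq)))
    (l : Polynomial Fq)
    {E : IntermediateField (↥L) (AlgebraicClosure (RatFunc Fq))}
    (c : Polynomial Fq → (↥E ≃ₐ[↥L] ↥E) → (↥E ≃ₐ[↥L] ↥E)) : Prop :=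
  ∀ (f : Polynomial Fq) (τ : ↥E ≃ₐ[↥L] ↥E), FixesTorsionD φ l τ →
    ∀ (n : ℕ) (g : Fin n → Polynomial Fq), (∀ i, IsCoprime (g i) l) →
      l ∣ (f - ∑ i, g i) →
      ∀ s : Fin n → (↥E ≃ₐ[↥L] ↥E), (∀ i, ExtendsSigmaD φ l (s i) (g i)) →
        c f τ = (List.ofFn (fun i => s i * τ * (s i)⁻¹)).prod

/-- Stand-in for the standing hypotheses on `l` in Section 3: `l` is a monic
irreducible polynomial of `A` such that (a) `φ` has good reduction at the primes of `L`
lying over `l`, and (b) `l` is unramified in the maximal separable subextension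
`L_s/k`.  By `[Goss, Theorem 7.7.1]` these conditions yield exactly that
`Gal(L(Λ_l^φ)/L) ≅ (A/lA)^*`, every element being of the form
`σ_u : λ ↦ φ_u(λ)` with `u` prime to `l`; we take this description of the Galois group
of `L_l = L(Λ_l^φ)` over `L` as the formal content of the hypotheses (a) and (b). -/
def GaloisGroupOfTorsionIsFull {Fq : Type} [Field Fq] [Fintype Fq]
    {L : IntermediateField (RatFunc Fq) (AlgebraicClosure (RatFunc Fq))}
    (φ : Polynomial Fq →+* AddMonoid.End (AlgebraicClosure (RatFunc Fq)))
    (l : Polynomial Fq)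
    (Ll : IntermediateField (↥L) (AlgebraicClosure (RatFunc Fq))) : Prop :=
  (∀ σ : ↥Ll ≃ₐ[↥L] ↥Ll, ∃ u : Polynomial Fq, ¬ l ∣ u ∧
    ∀ x : ↥Ll, φ l (x : AlgebraicClosure (RatFunc Fq)) = 0 →
      ((σ x : AlgebraicClosure (RatFunc Fq))) = φ u (x : AlgebraicClosure (RatFunc Fq))) ∧
  (∀ u : Polynomial Fq, ¬ l ∣ u → ∃ σ : ↥Ll ≃ₐ[↥L] ↥Ll,
    ∀ x : ↥Ll, φ l (x : AlgebraicClosure (RatFunc Fq)) = 0 →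
      ((σ x : AlgebraicClosure (RatFunc Fq))) = φ u (x : AlgebraicClosure (RatFunc Fq)))

/-- `φ_f` is given by a polynomial over `L` with constant derivative `f`. -/
theorem dk_poly {Fq : Type} [Field Fq] [Fintype Fq]
    (L : IntermediateField (RatFunc Fq) (AlgebraicClosure (RatFunc Fq)))
    (φ : Polynomial Fq →+* AddMonoid.End (AlgebraicClosure (RatFunc Fq)))
    (hφ : IsDrinfeldRankOne L φ) (f : Polynomial Fq) :
    ∃ P : Polynomial (↥L), (∀ x, φ f x = aeval x P) ∧
      derivative P = C (algebraMap (RatFunc Fq) (↥L) (algebraMap (Polynomial Fq) (RatFunc Fq) f)) := by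
  obtain ⟨a, haL, ha0, hX, hC⟩ := hφ
  have hq : ((Fintype.card Fq : ℕ) : (↥L)) = 0 := by
    have h := congrArg (fun z => algebraMap (RatFunc Fq) (↥L) (RatFunc.C z))
      (FiniteField.cast_card_eq_zero Fq)
    simpa only [map_natCast, map_zero] using h
  have hconst : ∀ c : Fq, ∃ P : Polynomial (↥L), (∀ x, φ (C c) x = aeval x P) ∧
      derivative P = C (algebraMap (RatFunc Fq) (↥L)
        (algebraMap (Polynomial Fq) (RatFunc Fq) (C c))) := by
    intro c
    refine ⟨C (algebraMap (RatFunc Fq) (↥L) (RatFunc.C c)) * X, fun x => ?_, ?_⟩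
    · rw [hC, map_mul, aeval_C, aeval_X]
      rfl
    · rw [derivative_C_mul, derivative_X, mul_one, RatFunc.algebraMap_C]
  have hXX : ∃ P : Polynomial (↥L), (∀ x, φ X x = aeval x P) ∧
      derivative P = C (algebraMap (RatFunc Fq) (↥L)
        (algebraMap (Polynomial Fq) (RatFunc Fq) X)) := by
    refine ⟨C (algebraMap (RatFunc Fq) (↥L) RatFunc.X) * X + C ⟨a, haL⟩ * X ^ Fintype.card Fq,
      fun x => ?_, ?_⟩
    · rw [hX, map_add, map_mul, map_mul, aeval_C, aeval_C, aeval_X, map_pow, aeval_X]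
      rfl
    · rw [derivative_add, derivative_C_mul, derivative_C_mul, derivative_X, mul_one,
        derivative_X_pow, hq, C_0, zero_mul, mul_zero, add_zero, RatFunc.algebraMap_X]
  induction f using Polynomial.induction_on with
  | C c => exact hconst c
  | add p q hp hq =>
    obtain ⟨P, hP, hP'⟩ := hp
    obtain ⟨Q, hQ, hQ'⟩ := hq
    refine ⟨P + Q, fun x => ?_, ?_⟩
    · rw [map_add, map_add, ← hP, ← hQ]; rfl
    · rw [derivative_add, hP', hQ', map_add, map_add, C_add]
  | monomial n c ih =>
    obtain ⟨P, hP, hP'⟩ := ih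
    obtain ⟨Q, hQ, hQ'⟩ := hXX
    refine ⟨Q.comp P, fun x => ?_, ?_⟩
    · rw [show C c * X ^ (n + 1) = X * (C c * X ^ n : Polynomial Fq) by ring, map_mul, aeval_comp,
        ← hP, ← hQ]; rfl
    · rw [derivative_comp, hP', hQ', C_comp, ← C_mul, ← map_mul, ← map_mul]
      congr 3
      ring

section
variable {Fq : Type} [Field Fq] [Fintype Fq]
    {L : IntermediateField (RatFunc Fq) (AlgebraicClosure (RatFunc Fq))}
    {φ : Polynomial Fq →+* AddMonoid.End (AlgebraicClosure (RatFunc Fq))}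

theorem dk_coe_sub (E : IntermediateField (↥L) (AlgebraicClosure (RatFunc Fq))) (x y : ↥E) :
    ((x - y : ↥E) : AlgebraicClosure (RatFunc Fq)) = (x : AlgebraicClosure (RatFunc Fq)) - y := rfl

theorem dk_coe_aeval (E : IntermediateField (↥L) (AlgebraicClosure (RatFunc Fq))) (x : ↥E)
    (P : Polynomial (↥L)) : ((aeval x P : ↥E) : AlgebraicClosure (RatFunc Fq)) =
      aeval (x : AlgebraicClosure (RatFunc Fq)) P :=
  (aeval_algHom_apply E.val x P).symm

theorem dk_mem (hφ : IsDrinfeldRankOne L φ) (f : Polynomial Fq)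
    (E : IntermediateField (↥L) (AlgebraicClosure (RatFunc Fq))) (x : ↥E) :
    φ f (x : AlgebraicClosure (RatFunc Fq)) ∈ E := by
  obtain ⟨P, hP, -⟩ := dk_poly L φ hφ f
  rw [hP, ← dk_coe_aeval]
  exact (aeval x P).2

theorem dk_hom (hφ : IsDrinfeldRankOne L φ) (f : Polynomial Fq)
    {E : IntermediateField (↥L) (AlgebraicClosure (RatFunc Fq))}
    (σ : ↥E →ₐ[↥L] AlgebraicClosure (RatFunc Fq)) (x y : ↥E)
    (h : φ f (x : AlgebraicClosure (RatFunc Fq)) = y) :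
    φ f (σ x) = σ y := by
  obtain ⟨P, hP, -⟩ := dk_poly L φ hφ f
  rw [hP, ← dk_coe_aeval] at h
  rw [hP, aeval_algHom_apply, Subtype.ext h]

theorem dk_aut (hφ : IsDrinfeldRankOne L φ) (f : Polynomial Fq)
    {E : IntermediateField (↥L) (AlgebraicClosure (RatFunc Fq))}
    (σ : ↥E ≃ₐ[↥L] ↥E) (x y : ↥E)
    (h : φ f (x : AlgebraicClosure (RatFunc Fq)) = y) :
    φ f (σ x : AlgebraicClosure (RatFunc Fq)) = (σ y : ↥E) :=
  dk_hom hφ f (E.val.comp σ.toAlgHom) x y h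

theorem dk_surj (hφ : IsDrinfeldRankOne L φ) {f : Polynomial Fq} (hf : f ≠ 0)
    (a : AlgebraicClosure (RatFunc Fq)) : ∃ α, φ f α = a := by
  obtain ⟨P, hP, hP'⟩ := dk_poly L φ hφ f
  have hne : algebraMap (RatFunc Fq) (↥L) (algebraMap (Polynomial Fq) (RatFunc Fq) f) ≠ 0 := by
    rw [Ne, map_eq_zero, FaithfulSMul.algebraMap_eq_zero_iff]; exact hf
  have hd : (P.map (algebraMap (↥L) (AlgebraicClosure (RatFunc Fq))) - C a).degree ≠ 0 := by
    intro h
    have h2 := eq_C_of_degree_eq_zero h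
    have h3 := congrArg derivative h2
    rw [derivative_C, derivative_sub, derivative_C, sub_zero, derivative_map, hP', map_C,
      C_eq_zero, map_eq_zero] at h3
    exact hne h3
  obtain ⟨α, hα⟩ := IsAlgClosed.exists_root _ hd
  refine ⟨α, ?_⟩
  rw [IsRoot.def, eval_sub, eval_C, sub_eq_zero, eval_map_algebraMap] at hα
  rw [hP, hα]

theorem dk_sep (hφ : IsDrinfeldRankOne L φ) {f : Polynomial Fq} (hf : f ≠ 0)
    (α : AlgebraicClosure (RatFunc Fq)) (h : φ f α ∈ L) : IsSeparable (↥L) α := by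
  obtain ⟨P, hP, hP'⟩ := dk_poly L φ hφ f
  have hne : algebraMap (RatFunc Fq) (↥L) (algebraMap (Polynomial Fq) (RatFunc Fq) f) ≠ 0 := by
    rw [Ne, map_eq_zero, FaithfulSMul.algebraMap_eq_zero_iff]; exact hf
  have hs : (P - C (⟨φ f α, h⟩ : ↥L)).Separable := by
    rw [Polynomial.separable_def, derivative_sub, derivative_C, sub_zero, hP']
    exact (isCoprime_one_right).of_isCoprime_of_dvd_right (isUnit_C.2 hne.isUnit).dvd
  refine hs.of_dvd (minpoly.dvd _ _ ?_)
  rw [map_sub, aeval_C, ← hP]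
  exact sub_self _

instance dk_normal_closure : Normal (↥L) (AlgebraicClosure (RatFunc Fq)) :=
  have : Algebra.IsAlgebraic (↥L) (AlgebraicClosure (RatFunc Fq)) :=
    Algebra.IsAlgebraic.tower_top (K := RatFunc Fq) _
  have : IsAlgClosure (↥L) (AlgebraicClosure (RatFunc Fq)) := ⟨inferInstance, inferInstance⟩
  IsAlgClosure.normal _ _

theorem dk_galois (hφ : IsDrinfeldRankOne L φ) {f : Polynomial Fq} (hf : f ≠ 0)
    (Γ : AddSubgroup (AlgebraicClosure (RatFunc Fq))) (hΓL : ∀ x ∈ Γ, x ∈ L) :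
    IsGalois (↥L) (↥(adjoin (↥L) {x | φ f x ∈ Γ})) := by
  have h1 : Algebra.IsSeparable (↥L) (↥(adjoin (↥L) {x | φ f x ∈ Γ})) :=
    (isSeparable_adjoin_iff_isSeparable _ _).2 fun x hx => dk_sep hφ hf x (hΓL _ hx)
  have h2 : Normal (↥L) (↥(adjoin (↥L) {x | φ f x ∈ Γ})) := by
    rw [IntermediateField.normal_iff_forall_map_le]
    intro σ
    rw [adjoin_map]
    apply adjoin.mono
    rintro _ ⟨x, hx, rfl⟩
    obtain ⟨P, hP, -⟩ := dk_poly L φ hφ f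
    have hx' : φ f x ∈ Γ := hx
    have : φ f (σ x) = φ f x := by
      have h : φ f x = algebraMap (↥L) _ (⟨φ f x, hΓL _ hx'⟩ : ↥L) := rfl
      calc φ f (σ x) = σ (φ f x) := by rw [hP, hP, aeval_algHom_apply]
        _ = φ f x := by rw [h, σ.commutes]
    change φ f (σ x) ∈ Γ
    rw [this]; exact hx'
  exact ⟨⟩

end

/-- **Proposition 3.3.**
Let `l` be a monic irreducible polynomial of `A` such that `φ` has good reduction at
the primes of `L` lying over `l` and `l` is unramified in the maximal separable
subextension `L_s/k` (encoded by `GaloisGroupOfTorsionIsFull`).  Let `Γ` be a finitely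
generated `A`-submodule of `(L,+)`, `L_l = L(Λ_l^φ)`, `L_{l,Γ} = L(Λ_l^φ, (1/l)Γ)` and
`H_{l,Γ} = Gal(L_{l,Γ}/L_l)` with its natural `A`-module structure `c`.  The map
`H_{l,Γ} × Γ → Λ_l^φ`, `(σ, a) ↦ ⟨σ, a⟩ = σα - α` (where `φ_l(α) = a`) is well defined
and `A`-bilinear; its kernel on the left is `{1}` and its kernel on the right is
`Γ ∩ φ_l(L_l)`. -/
theorem drinfeld_kummer_pairing
    {Fq : Type} [Field Fq] [Fintype Fq]
    (L : IntermediateField (RatFunc Fq) (AlgebraicClosure (RatFunc Fq)))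
    [FiniteDimensional (RatFunc Fq) (↥L)]
    (φ : Polynomial Fq →+* AddMonoid.End (AlgebraicClosure (RatFunc Fq)))
    (hφ : IsDrinfeldRankOne L φ)
    (l : Polynomial Fq) (hlm : l.Monic) (hlirr : Irreducible l)
    (Ll : IntermediateField (↥L) (AlgebraicClosure (RatFunc Fq)))
    (hLl : Ll = adjoin (↥L) {x | φ l x = 0})
    (hGal : GaloisGroupOfTorsionIsFull φ l Ll)
    -- Γ : a finitely generated A-submodule of (L, +)
    (Γ : AddSubgroup (AlgebraicClosure (RatFunc Fq)))
    (hΓL : ∀ x ∈ Γ, x ∈ L)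
    (hΓA : ∀ (f : Polynomial Fq), ∀ x ∈ Γ, φ f x ∈ Γ)
    (hΓfg : ∃ (n : ℕ) (a : Fin n → AlgebraicClosure (RatFunc Fq)), (∀ i, a i ∈ Γ) ∧
      ∀ x ∈ Γ, ∃ g : Fin n → Polynomial Fq, x = ∑ i, φ (g i) (a i))
    -- L_{l,Γ} = L(Λ_l^φ, (1/l)Γ)
    (E : IntermediateField (↥L) (AlgebraicClosure (RatFunc Fq)))
    (hE : E = adjoin (↥L) {x | φ l x ∈ Γ})
    -- the natural A-module structure on H_{l,Γ} = Gal(L_{l,Γ}/L_l)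
    (c : Polynomial Fq → (↥E ≃ₐ[↥L] ↥E) → (↥E ≃ₐ[↥L] ↥E))
    (hc : IsDecompConjActionD φ l c)
    (hcH : ∀ f τ, FixesTorsionD φ l τ → FixesTorsionD φ l (c f τ)) :
    ∃ p : (↥E ≃ₐ[↥L] ↥E) → AlgebraicClosure (RatFunc Fq) →
        AlgebraicClosure (RatFunc Fq),
      -- p computes the pairing ⟨σ, a⟩ = σα - α (independently of the chosen root α)
      (∀ σ, FixesTorsionD φ l σ → ∀ a ∈ Γ, ∀ α : ↥E,
        φ l (α : AlgebraicClosure (RatFunc Fq)) = a →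
        p σ a = (σ α : AlgebraicClosure (RatFunc Fq)) - (α : AlgebraicClosure (RatFunc Fq))) ∧
      -- with values in Λ_l^φ
      (∀ σ, FixesTorsionD φ l σ → ∀ a ∈ Γ, φ l (p σ a) = 0) ∧
      -- A-bilinearity
      (∀ σ τ, FixesTorsionD φ l σ → FixesTorsionD φ l τ → ∀ a ∈ Γ,
        p (σ * τ) a = p σ a + p τ a) ∧
      (∀ f σ, FixesTorsionD φ l σ → ∀ a ∈ Γ, p (c f σ) a = φ f (p σ a)) ∧
      (∀ σ, FixesTorsionD φ l σ → ∀ a ∈ Γ, ∀ b ∈ Γ, p σ (a + b) = p σ a + p σ b) ∧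
      (∀ f σ, FixesTorsionD φ l σ → ∀ a ∈ Γ, p σ (φ f a) = φ f (p σ a)) ∧
      -- the kernel on the left is {1}
      (∀ σ, FixesTorsionD φ l σ → (∀ a ∈ Γ, p σ a = 0) → σ = 1) ∧
      -- the kernel on the right is Γ ∩ φ_l(L_l)
      (∀ a ∈ Γ, (∀ σ, FixesTorsionD φ l σ → p σ a = 0) ↔
        ∃ β : AlgebraicClosure (RatFunc Fq), β ∈ Ll ∧ φ l β = a) := by
  have hl0 : l ≠ 0 := hlirr.ne_zero
  have hGalE : IsGalois (↥L) (↥E) := by rw [hE]; exact dk_galois hφ hl0 Γ hΓL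
  have hmemE : ∀ x, φ l x ∈ Γ → x ∈ E := fun x hx => by rw [hE]; exact subset_adjoin _ _ hx
  have htorE : ∀ x, φ l x = 0 → x ∈ E := fun x hx => hmemE x (by rw [hx]; exact Γ.zero_mem)
  have htorLl : ∀ x, φ l x = 0 → x ∈ Ll := fun x hx => by rw [hLl]; exact subset_adjoin _ _ hx
  have hLE : Ll ≤ E := by
    rw [hLl, adjoin_le_iff]
    exact fun x hx => htorE x hx
  have hroot : ∀ a ∈ Γ, ∃ α : ↥E, φ l (α : AlgebraicClosure (RatFunc Fq)) = a := by
    intro a ha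
    obtain ⟨α, hα⟩ := dk_surj hφ hl0 a
    exact ⟨⟨α, hmemE α (by rw [hα]; exact ha)⟩, hα⟩
  -- automorphisms preserve roots
  have hpres : ∀ (σ : ↥E ≃ₐ[↥L] ↥E), ∀ a ∈ Γ, ∀ α : ↥E,
      φ l (α : AlgebraicClosure (RatFunc Fq)) = a →
      φ l (σ α : AlgebraicClosure (RatFunc Fq)) = a := by
    intro σ a ha α hα
    have h := dk_aut hφ l σ α (algebraMap (↥L) (↥E) ⟨a, hΓL a ha⟩) (by rw [hα]; rfl)
    rw [h, σ.commutes]; rfl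
  have hcomm : ∀ f g x, φ f (φ g x) = φ g (φ f x) := by
    intro f g x
    have h : φ f * φ g = φ g * φ f := by rw [← map_mul, ← map_mul, mul_comm]
    exact DFunLike.congr_fun h x
  classical
  let p : (↥E ≃ₐ[↥L] ↥E) → AlgebraicClosure (RatFunc Fq) → AlgebraicClosure (RatFunc Fq) :=
    fun σ a => if h : ∃ α : ↥E, φ l (α : AlgebraicClosure (RatFunc Fq)) = a then
      (σ h.choose : AlgebraicClosure (RatFunc Fq)) - (h.choose : AlgebraicClosure (RatFunc Fq))
      else 0
  have hp : ∀ σ, FixesTorsionD φ l σ → ∀ a ∈ Γ, ∀ α : ↥E,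
        φ l (α : AlgebraicClosure (RatFunc Fq)) = a →
        p σ a = (σ α : AlgebraicClosure (RatFunc Fq)) - (α : AlgebraicClosure (RatFunc Fq)) := by
    intro σ hσ a ha α hα
    have h : ∃ α : ↥E, φ l (α : AlgebraicClosure (RatFunc Fq)) = a := ⟨α, hα⟩
    have h1 : p σ a = (σ h.choose : AlgebraicClosure (RatFunc Fq)) -
      (h.choose : AlgebraicClosure (RatFunc Fq)) := dif_pos h
    have h2 := h.choose_spec
    rw [h1]
    have h3 : σ (h.choose - α) = h.choose - α := by
      apply hσ
      rw [dk_coe_sub, map_sub, h2, hα, sub_self]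
    rw [map_sub] at h3
    have h4 := congrArg (fun z : ↥E => (z : AlgebraicClosure (RatFunc Fq))) h3
    simp only [dk_coe_sub] at h4
    linear_combination h4
  have hptor : ∀ σ, FixesTorsionD φ l σ → ∀ a ∈ Γ, φ l (p σ a) = 0 := by
    intro σ hσ a ha
    obtain ⟨α, hα⟩ := hroot a ha
    rw [hp σ hσ a ha α hα, map_sub, hpres σ a ha α hα, hα, sub_self]
  have hone : FixesTorsionD φ l (1 : ↥E ≃ₐ[↥L] ↥E) := fun x _ => rfl
  -- elements fixing the torsion fix L_l
  have hfix : ∀ σ : ↥E ≃ₐ[↥L] ↥E, FixesTorsionD φ l σ → ∀ x : ↥E,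
      (x : AlgebraicClosure (RatFunc Fq)) ∈ Ll → σ x = x := by
    intro σ hσ x hx
    have h : (E.val.comp σ.toAlgHom).comp (inclusion hLE) = E.val.comp (inclusion hLE) := by
      refine algHom_ext_of_eq_adjoin _ hLl fun y hy => ?_
      exact congrArg (fun z : ↥E => (z : AlgebraicClosure (RatFunc Fq)))
        (hσ ⟨y, htorE y hy⟩ hy)
    have h2 := DFunLike.congr_fun h ⟨x, hx⟩
    exact Subtype.ext h2
  -- extending the σ_u
  have hext : ∀ u, ¬ l ∣ u → ∃ s : ↥E ≃ₐ[↥L] ↥E, ExtendsSigmaD φ l s u := by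
    intro u hu
    obtain ⟨σ, hσ⟩ := hGal.2 u hu
    refine ⟨(σ.liftNormal (AlgebraicClosure (RatFunc Fq))).restrictNormal (↥E), fun x hx => ?_⟩
    have h1 := AlgEquiv.restrictNormal_commutes
      (σ.liftNormal (AlgebraicClosure (RatFunc Fq))) (↥E) x
    have h2 := AlgEquiv.liftNormal_commutes σ (AlgebraicClosure (RatFunc Fq)) ⟨x, htorLl x hx⟩
    exact h1.trans (h2.trans (hσ ⟨x, htorLl x hx⟩ hx))
  refine ⟨p, hp, hptor, ?_, ?_, ?_, ?_, ?_, ?_⟩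
  · intro σ τ hσ hτ a ha
    have hστ : FixesTorsionD φ l (σ * τ) := fun x hx => by
      rw [AlgEquiv.mul_apply, hτ x hx, hσ x hx]
    obtain ⟨α, hα⟩ := hroot a ha
    rw [hp _ hστ a ha α hα, hp _ hτ a ha α hα, hp _ hσ a ha (τ α) (hpres τ a ha α hα),
      AlgEquiv.mul_apply]
    ring
  · intro f σ hσ a ha
    obtain ⟨α, hα⟩ := hroot a ha
    by_cases hlf : l ∣ f
    · have h1 := hc f σ hσ 0 Fin.elim0 (fun i => i.elim0) (by simpa using hlf) Fin.elim0
        (fun i => i.elim0)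
      have h2 : c f σ = 1 := by rw [h1]; simp
      obtain ⟨g, rfl⟩ := hlf
      have h3 : φ (l * g) (p σ a) = 0 := by
        rw [mul_comm, map_mul]
        change φ g (φ l (p σ a)) = 0
        rw [hptor σ hσ a ha, map_zero]
      rw [h2, h3, hp 1 hone a ha α hα, AlgEquiv.one_apply, sub_self]
    · obtain ⟨s, hs⟩ := hext f hlf
      have h1 := hc f σ hσ 1 (fun _ => f)
        (fun _ => ((hlirr.coprime_iff_not_dvd).2 hlf).symm) (by simp) (fun _ => s) (fun _ => hs)
      have h2 : c f σ = s * σ * s⁻¹ := by rw [h1]; simp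
      have h3 := hcH f σ hσ
      rw [hp _ h3 a ha α hα, h2]
      have h4 := hpres s⁻¹ a ha α hα
      have h5 := hp σ hσ a ha (s⁻¹ α) h4
      have h6 := hptor σ hσ a ha
      have h7 := hs (σ (s⁻¹ α) - s⁻¹ α) (by rw [dk_coe_sub, ← h5, h6])
      have h8 : s (s⁻¹ α) = α := s.apply_symm_apply α
      rw [map_sub, h8, dk_coe_sub, dk_coe_sub, ← h5] at h7
      rw [← h7]; rfl
  · intro σ hσ a ha b hb
    obtain ⟨α, hα⟩ := hroot a ha
    obtain ⟨β, hβ⟩ := hroot b hb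
    rw [hp σ hσ a ha α hα, hp σ hσ b hb β hβ, hp σ hσ (a + b) (Γ.add_mem ha hb) (α + β)
      (by rw [IntermediateField.coe_add, map_add, hα, hβ]), map_add, IntermediateField.coe_add,
      IntermediateField.coe_add]
    ring
  · intro f σ hσ a ha
    obtain ⟨α, hα⟩ := hroot a ha
    rw [hp σ hσ a ha α hα, hp σ hσ (φ f a) (hΓA f a ha) ⟨φ f α, dk_mem hφ f E α⟩
      (by rw [← hα]; exact hcomm l f α), map_sub,
      dk_aut hφ f σ α ⟨φ f α, dk_mem hφ f E α⟩ rfl]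
  · intro σ hσ h
    have h' : E.val.comp σ.toAlgHom = E.val := by
      refine algHom_ext_of_eq_adjoin _ hE fun y hy => ?_
      have h1 := hp σ hσ _ hy ⟨y, hmemE y hy⟩ rfl
      rw [h _ hy] at h1
      exact (sub_eq_zero.1 h1.symm)
    ext x
    exact DFunLike.congr_fun h' x
  · intro a ha
    constructor
    · intro h
      obtain ⟨α, hα⟩ := hroot a ha
      refine ⟨α, ?_, hα⟩
      have h1 : α ∈ fixedField (fixingSubgroup (Ll.comap E.val)) := by
        rw [mem_fixedField_iff]
        intro σ hσ
        have hσ' : FixesTorsionD φ l σ := fun x hx =>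
          (mem_fixingSubgroup_iff _ _).1 hσ x (htorLl x hx)
        have h2 := hp σ hσ' a ha α hα
        rw [h σ hσ'] at h2
        exact Subtype.ext (sub_eq_zero.1 h2.symm)
      rw [InfiniteGalois.fixedField_fixingSubgroup] at h1
      exact h1
    · rintro ⟨β, hβ, hβa⟩ σ hσ
      rw [hp σ hσ a ha ⟨β, hLE hβ⟩ hβa, hfix σ hσ ⟨β, hLE hβ⟩ hβ, sub_self]
end

section
/- Let l be a monic irreducible polynomial of A such that φ has good reduction at the primes of L lying over l and l is unramified in the maximal separable subextension L_s/k. Let e_l(Γ) = gcd(e(Γ'/Γ), l) and let Γ_φ = {a ∈ Γ : ⟨σ, a⟩ = 0 for all σ ∈ H_Γ(l)} be the kernel of the induced map Γ → Hom_A(H_Γ(l), Λ_l^φ). Then φ_{e_l(Γ)}(Γ_φ) ⊆ φ_l(Γ). -/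
open Polynomial IntermediateField

set_option synthInstance.maxHeartbeats 1000000
set_option maxHeartbeats 1000000

namespace DKB

theorem fixed_mem {K Ω : Type*} [Field K] [Field Ω] [Algebra K Ω] [Normal K Ω] (x : Ω)
    (hs : IsSeparable K x) (hx : ∀ σ : Ω ≃ₐ[K] Ω, σ x = x) : ∃ y : K, algebraMap K Ω y = x := by
  have hint : IsIntegral K x := hs.isIntegral
  have h1 : (minpoly K x).degree = 1 := by
    have hspl := Normal.splits (F := K) (K := Ω) inferInstance x
    have hcard := Polynomial.card_rootSet_eq_natDegree (K := Ω) hs hspl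
    have hsub : (minpoly K x).rootSet Ω ⊆ {x} := by
      intro y hy
      have hy0 : aeval y (minpoly K x) = 0 := (Polynomial.mem_rootSet.1 hy).2
      have hm : minpoly K x = minpoly K y :=
        minpoly.eq_of_irreducible_of_monic (minpoly.irreducible hint) hy0 (minpoly.monic hint)
      obtain ⟨σ, hσ⟩ := (Normal.minpoly_eq_iff_mem_orbit (F := K) (E := Ω) (x := y) (y := x)).1 hm.symm
      have : σ x = y := hσ
      rw [hx σ] at this
      exact this.symm
    have hle : (minpoly K x).natDegree ≤ 1 := by
      rw [← hcard, Fintype.card_le_one_iff_subsingleton]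
      exact ⟨fun a b => Subtype.ext ((hsub a.2).trans (hsub b.2).symm)⟩
    have hpos := minpoly.natDegree_pos hint
    exact (Polynomial.degree_eq_iff_natDegree_eq_of_pos one_pos).2 (by omega)
  exact minpoly.mem_range_of_degree_eq_one K x h1

variable {Fq : Type} [Field Fq] [Fintype Fq]

theorem exists_poly
    (L : IntermediateField (RatFunc Fq) (AlgebraicClosure (RatFunc Fq)))
    (φ : Polynomial Fq →+* AddMonoid.End (AlgebraicClosure (RatFunc Fq)))
    (hφ : IsDrinfeldRankOne L φ) (f : Polynomial Fq) :
    ∃ P : Polynomial L, (∀ x, φ f x = aeval x P) ∧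
      derivative P = C (algebraMap (RatFunc Fq) L (algebraMap (Polynomial Fq) (RatFunc Fq) f)) := by
  obtain ⟨a, haL, ha0, hX, hC⟩ := hφ
  have hq : ((Fintype.card Fq : ℕ) : Polynomial L) = 0 := by
    have h := FiniteField.cast_card_eq_zero Fq
    have h2 := congrArg (((C : L →+* Polynomial L).comp (algebraMap (RatFunc Fq) L)).comp
      (RatFunc.C : Fq →+* RatFunc Fq)) h
    rwa [map_natCast, map_zero] at h2
  have hCc : ∀ c : Fq, ∃ P : Polynomial L, (∀ x, φ (C c) x = aeval x P) ∧
      derivative P = C (algebraMap (RatFunc Fq) L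
        (algebraMap (Polynomial Fq) (RatFunc Fq) (C c))) := by
    intro c
    refine ⟨C (algebraMap (RatFunc Fq) L (RatFunc.C c)) * X, ?_, ?_⟩
    · intro x
      rw [hC, map_mul, aeval_C, aeval_X]
      rfl
    · simp [RatFunc.algebraMap_C]
  induction f using Polynomial.induction_on with
  | C c => exact hCc c
  | add f g hf hg =>
    obtain ⟨P, hP, hP'⟩ := hf
    obtain ⟨Q, hQ, hQ'⟩ := hg
    refine ⟨P + Q, ?_, ?_⟩
    · intro x
      rw [map_add, map_add, ← hP, ← hQ]
      rfl
    · simp [hP', hQ']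
  | monomial n c h =>
    obtain ⟨P, hP, hP'⟩ := h
    refine ⟨C (algebraMap (RatFunc Fq) L RatFunc.X) * P + C ⟨a, haL⟩ * P ^ Fintype.card Fq, ?_, ?_⟩
    · intro x
      have : (C c * X ^ (n + 1) : Polynomial Fq) = X * (C c * X ^ n) := by ring
      rw [this, map_mul]
      change φ X (φ (C c * X ^ n) x) = _
      rw [hX, hP]
      simp only [map_add, map_mul, map_pow, aeval_C]
      rfl
    · simp only [derivative_add, derivative_C_mul, derivative_pow, hP', map_mul, map_pow]
      simp [hq, RatFunc.algebraMap_X]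
      ring

theorem phi_comm
    {L : IntermediateField (RatFunc Fq) (AlgebraicClosure (RatFunc Fq))}
    {φ : Polynomial Fq →+* AddMonoid.End (AlgebraicClosure (RatFunc Fq))}
    (hφ : IsDrinfeldRankOne L φ) (f : Polynomial Fq)
    (σ : AlgebraicClosure (RatFunc Fq) →ₐ[L] AlgebraicClosure (RatFunc Fq))
    (x : AlgebraicClosure (RatFunc Fq)) : φ f (σ x) = σ (φ f x) := by
  obtain ⟨P, hP, -⟩ := exists_poly L φ hφ f
  rw [hP, hP, Polynomial.aeval_algHom_apply]

theorem sep
    {L : IntermediateField (RatFunc Fq) (AlgebraicClosure (RatFunc Fq))}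
    {φ : Polynomial Fq →+* AddMonoid.End (AlgebraicClosure (RatFunc Fq))}
    (hφ : IsDrinfeldRankOne L φ) {f : Polynomial Fq} (hf : f ≠ 0)
    (x : AlgebraicClosure (RatFunc Fq)) (hx : φ f x ∈ L) : IsSeparable L x := by
  obtain ⟨P, hP, hP'⟩ := exists_poly L φ hφ f
  have hs : (P - C (⟨φ f x, hx⟩ : L)).Separable := by
    rw [Polynomial.Separable]
    have : derivative (P - C (⟨φ f x, hx⟩ : L)) = C (algebraMap (RatFunc Fq) L
      (algebraMap (Polynomial Fq) (RatFunc Fq) f)) := by simp [hP']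
    rw [this]
    refine (isCoprime_one_right (x := P - C (⟨φ f x, hx⟩ : L))).of_isCoprime_of_dvd_right ?_
    refine (Polynomial.isUnit_C.2 ?_).dvd
    refine IsUnit.mk0 _ ?_
    simpa using hf
  refine hs.of_dvd (minpoly.dvd _ _ ?_)
  rw [map_sub, aeval_C, ← hP]
  exact sub_self _

theorem surj
    {L : IntermediateField (RatFunc Fq) (AlgebraicClosure (RatFunc Fq))}
    {φ : Polynomial Fq →+* AddMonoid.End (AlgebraicClosure (RatFunc Fq))}
    (hφ : IsDrinfeldRankOne L φ) {f : Polynomial Fq} (hf : f ≠ 0)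
    (a : AlgebraicClosure (RatFunc Fq)) (ha : a ∈ L) : ∃ x, φ f x = a := by
  obtain ⟨P, hP, hP'⟩ := exists_poly L φ hφ f
  have hd : derivative (P - C (⟨a, ha⟩ : L)) ≠ 0 := by
    simp [hP', hf]
  obtain ⟨x, hx⟩ := IsAlgClosed.exists_aeval_eq_zero (AlgebraicClosure (RatFunc Fq))
    (P - C (⟨a, ha⟩ : L)) (fun h => hd (by rw [Polynomial.eq_C_of_degree_eq_zero h]; simp))
  refine ⟨x, ?_⟩
  rw [hP]
  rw [map_sub, aeval_C] at hx
  exact sub_eq_zero.1 hx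

theorem fin
    {L : IntermediateField (RatFunc Fq) (AlgebraicClosure (RatFunc Fq))}
    {φ : Polynomial Fq →+* AddMonoid.End (AlgebraicClosure (RatFunc Fq))}
    (hφ : IsDrinfeldRankOne L φ) {f : Polynomial Fq} (hf : f ≠ 0) :
    {x | φ f x = 0}.Finite := by
  obtain ⟨P, hP, hP'⟩ := exists_poly L φ hφ f
  have hP0 : P ≠ 0 := by
    rintro rfl
    simp at hP'
    exact hf (by simpa using hP'.symm)
  refine (Polynomial.rootSet_finite P (AlgebraicClosure (RatFunc Fq))).subset ?_
  intro x hx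
  rw [Polynomial.mem_rootSet]
  exact ⟨hP0, by rw [← hP]; exact hx⟩

instance normalTop (L : IntermediateField (RatFunc Fq) (AlgebraicClosure (RatFunc Fq))) :
    Normal L (AlgebraicClosure (RatFunc Fq)) :=
  Normal.tower_top_of_normal (RatFunc Fq) L _

theorem gal
    {L : IntermediateField (RatFunc Fq) (AlgebraicClosure (RatFunc Fq))}
    {φ : Polynomial Fq →+* AddMonoid.End (AlgebraicClosure (RatFunc Fq))}
    (hφ : IsDrinfeldRankOne L φ) {f : Polynomial Fq} (hf : f ≠ 0)
    (Γ : AddSubgroup (AlgebraicClosure (RatFunc Fq))) (hΓL : ∀ x ∈ Γ, x ∈ L)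
    (E : IntermediateField (↥L) (AlgebraicClosure (RatFunc Fq)))
    (hE : E = adjoin (↥L) {x | φ f x ∈ Γ}) : IsGalois L E := by
  subst hE
  have h1 : Algebra.IsSeparable L (adjoin (↥L) {x | φ f x ∈ Γ}) := by
    rw [IntermediateField.isSeparable_adjoin_iff_isSeparable]
    intro x hx
    exact sep hφ hf x (hΓL _ hx)
  have h2 : Normal L (adjoin (↥L) {x | φ f x ∈ Γ}) := by
    rw [IntermediateField.normal_iff_forall_map_le]
    intro σ
    rw [IntermediateField.adjoin_map, IntermediateField.adjoin_le_iff]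
    rintro _ ⟨x, hx, rfl⟩
    apply IntermediateField.subset_adjoin
    change φ f (σ x) ∈ Γ
    have hx' : φ f x ∈ Γ := hx
    rw [phi_comm hφ]
    have := σ.commutes ⟨φ f x, hΓL _ hx'⟩
    change σ (φ f x) = φ f x at this
    rwa [this]
  exact ⟨⟩

theorem phi_coe
    {L : IntermediateField (RatFunc Fq) (AlgebraicClosure (RatFunc Fq))}
    {φ : Polynomial Fq →+* AddMonoid.End (AlgebraicClosure (RatFunc Fq))}
    (hφ : IsDrinfeldRankOne L φ) (f : Polynomial Fq)
    {E : IntermediateField (↥L) (AlgebraicClosure (RatFunc Fq))} (σ : E ≃ₐ[L] E) (x : E)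
    (h : φ f (x : AlgebraicClosure (RatFunc Fq)) ∈ L) :
    φ f (σ x : AlgebraicClosure (RatFunc Fq)) = φ f (x : AlgebraicClosure (RatFunc Fq)) := by
  obtain ⟨P, hP, -⟩ := exists_poly L φ hφ f
  have key : ∀ y : E, φ f (y : AlgebraicClosure (RatFunc Fq)) = ((aeval y P : E) : _) := by
    intro y
    rw [hP]
    exact Polynomial.aeval_algHom_apply E.val y P
  have h2 : (aeval x P : E) = algebraMap L E ⟨_, h⟩ := by
    apply Subtype.ext
    rw [← key]
    rfl
  have h3 : (aeval (σ x) P : E) = aeval x P := by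
    have := Polynomial.aeval_algHom_apply σ.toAlgHom x P
    change (aeval (σ x) P : E) = σ (aeval x P) at this
    rw [this, h2, σ.commutes]
  rw [key, key, h3]

end DKB

/-- **Theorem 3.4.**
Let `l` be a monic irreducible polynomial of `A` such that `φ` has good reduction at
the primes of `L` lying over `l` and `l` is unramified in the maximal separable
subextension `L_s/k` (encoded by `GaloisGroupOfTorsionIsFull`).  Let `Γ` be a finitely
generated `A`-submodule of `(L,+)`, `Γ' = (1/l)Γ ∩ L`, let `e = e(Γ'/Γ)` be the monic
polynomial of smallest degree with `φ_e(Γ') ⊆ Γ`, and let `e_l(Γ) = gcd(e(Γ'/Γ), l)`.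
Let `Γ_φ = {a ∈ Γ : ⟨σ, a⟩ = 0 for all σ ∈ H_Γ(l)}` be the kernel of the induced map
`Γ → Hom_A(H_Γ(l), Λ_l^φ)`.  Then `φ_{e_l(Γ)}(Γ_φ) ⊆ φ_l(Γ)`. -/
theorem drinfeld_kummer_kernel_bound
    {Fq : Type} [Field Fq] [Fintype Fq]
    (L : IntermediateField (RatFunc Fq) (AlgebraicClosure (RatFunc Fq)))
    [FiniteDimensional (RatFunc Fq) (↥L)]
    (φ : Polynomial Fq →+* AddMonoid.End (AlgebraicClosure (RatFunc Fq)))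
    (hφ : IsDrinfeldRankOne L φ)
    (l : Polynomial Fq) (hlm : l.Monic) (hlirr : Irreducible l)
    (Ll : IntermediateField (↥L) (AlgebraicClosure (RatFunc Fq)))
    (hLl : Ll = adjoin (↥L) {x | φ l x = 0})
    (hGal : GaloisGroupOfTorsionIsFull φ l Ll)
    -- Γ : a finitely generated A-submodule of (L, +)
    (Γ : AddSubgroup (AlgebraicClosure (RatFunc Fq)))
    (hΓL : ∀ x ∈ Γ, x ∈ L)
    (hΓA : ∀ (f : Polynomial Fq), ∀ x ∈ Γ, φ f x ∈ Γ)
    (hΓfg : ∃ (n : ℕ) (a : Fin n → AlgebraicClosure (RatFunc Fq)), (∀ i, a i ∈ Γ) ∧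
      ∀ x ∈ Γ, ∃ g : Fin n → Polynomial Fq, x = ∑ i, φ (g i) (a i))
    -- L_{l,Γ} = L(Λ_l^φ, (1/l)Γ)
    (E : IntermediateField (↥L) (AlgebraicClosure (RatFunc Fq)))
    (hE : E = adjoin (↥L) {x | φ l x ∈ Γ})
    -- e = e(Γ'/Γ) : the exponent of Γ' = (1/l)Γ ∩ L over Γ
    (e : Polynomial Fq) (he : e.Monic)
    (heΓ : ∀ x : AlgebraicClosure (RatFunc Fq), x ∈ L → φ l x ∈ Γ → φ e x ∈ Γ)
    (hemin : ∀ e' : Polynomial Fq, e'.Monic →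
      (∀ x : AlgebraicClosure (RatFunc Fq), x ∈ L → φ l x ∈ Γ → φ e' x ∈ Γ) →
      e.degree ≤ e'.degree)
    -- d = e_l(Γ) = gcd(e(Γ'/Γ), l)
    (d : Polynomial Fq) (hd1 : d ∣ e) (hd2 : d ∣ l)
    (hd3 : ∀ d' : Polynomial Fq, d' ∣ e → d' ∣ l → d' ∣ d) :
    -- φ_{e_l(Γ)}(Γ_φ) ⊆ φ_l(Γ)
    ∀ a ∈ Γ,
      (∀ σ : ↥E ≃ₐ[↥L] ↥E, FixesTorsionD φ l σ →
        ∀ α : ↥E, φ l (α : AlgebraicClosure (RatFunc Fq)) = a → σ α = α) →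
      ∃ γ ∈ Γ, φ l γ = φ d a := by
  intro a ha hfix
  classical
  have hl0 : l ≠ 0 := hlirr.ne_zero
  have hLl' : Ll = adjoin (↥L) {x | φ l x ∈ (⊥ : AddSubgroup (AlgebraicClosure (RatFunc Fq)))} := by
    simpa [AddSubgroup.mem_bot] using hLl
  have hGE : IsGalois L E := DKB.gal hφ hl0 Γ hΓL E hE
  have hGL : IsGalois L Ll := DKB.gal hφ hl0 ⊥
    (fun x hx => by rw [AddSubgroup.mem_bot.1 hx]; exact L.zero_mem) Ll hLl'
  have hFL : FiniteDimensional L Ll := by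
    rw [hLl]
    have := (DKB.fin hφ hl0).to_subtype
    exact IntermediateField.finiteDimensional_adjoin
      (fun x hx => (DKB.sep hφ hl0 x (by
        have hx' : φ l x = 0 := hx
        rw [hx']; exact L.zero_mem)).isIntegral)
  obtain ⟨α, hα⟩ := DKB.surj hφ hl0 a (hΓL a ha)
  have hαE : α ∈ E := by
    rw [hE]
    apply IntermediateField.subset_adjoin
    change φ l α ∈ Γ
    rwa [hα]
  -- α lies in Ll
  have hαL : α ∈ Ll := by
    have hsep : IsSeparable L α := DKB.sep hφ hl0 α (by rw [hα]; exact hΓL a ha)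
    have hsep' : IsSeparable Ll α := hsep.tower_top Ll
    have : Normal Ll (AlgebraicClosure (RatFunc Fq)) := Normal.tower_top_of_normal L Ll _
    obtain ⟨y, hy⟩ := DKB.fixed_mem (K := Ll) α hsep' (by
      intro σ
      have hn : Normal L E := hGE.to_normal
      let τ : E ≃ₐ[L] E := (σ.restrictScalars L).restrictNormal E
      have hτ : ∀ x : E, ((τ x : E) : AlgebraicClosure (RatFunc Fq)) = σ x := by
        intro x
        exact AlgEquiv.restrictNormal_commutes (σ.restrictScalars L) E x
      have h1 : FixesTorsionD φ l τ := by
        intro x hx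
        apply Subtype.ext
        rw [hτ]
        have hxL : (x : AlgebraicClosure (RatFunc Fq)) ∈ Ll := by
          rw [hLl]
          exact IntermediateField.subset_adjoin _ _ hx
        exact σ.commutes ⟨x, hxL⟩
      have h2 := hfix τ h1 ⟨α, hαE⟩ hα
      have h3 := hτ ⟨α, hαE⟩
      rw [h2] at h3
      exact h3.symm)
    rw [← hy]
    exact y.2
  -- the Galois group has order prime to p
  obtain ⟨p, hpc⟩ := CharP.exists Fq
  have hp : p.Prime := CharP.char_is_prime Fq p
  haveI : Fact p.Prime := ⟨hp⟩
  have hcop : ¬ p ∣ Nat.card (Ll ≃ₐ[L] Ll) := by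
    intro hdvd
    obtain ⟨σ, hσ⟩ := exists_prime_orderOf_dvd_card' p hdvd
    obtain ⟨u, -, hu⟩ := hGal.1 σ
    have hstep : ∀ x : Ll, φ l (x : AlgebraicClosure (RatFunc Fq)) = 0 → ∀ n : ℕ,
        (((σ ^ n) x : Ll) : AlgebraicClosure (RatFunc Fq)) = φ (u ^ n) x := by
      intro x hx n
      induction n with
      | zero => simp
      | succ n ih =>
        rw [pow_succ', pow_succ', AlgEquiv.mul_apply, hu, ih, map_mul]
        · rfl
        · rw [ih]
          change (φ l * φ (u ^ n)) (x : AlgebraicClosure (RatFunc Fq)) = 0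
          rw [← map_mul, mul_comm, map_mul]
          change φ (u ^ n) (φ l (x : AlgebraicClosure (RatFunc Fq))) = 0
          rw [hx, map_zero]
    have hone : ∀ x : Ll, φ l (x : AlgebraicClosure (RatFunc Fq)) = 0 → σ x = x := by
      intro x hx
      by_cases hlu : l ∣ u - 1
      · obtain ⟨w, hw⟩ := hlu
        apply Subtype.ext
        rw [hu x hx]
        have : u = 1 + w * l := by rw [mul_comm w, ← hw]; ring
        rw [this, map_add, map_mul, map_one]
        change (x : AlgebraicClosure (RatFunc Fq)) + φ w (φ l (x : AlgebraicClosure (RatFunc Fq))) = _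
        rw [hx, map_zero, add_zero]
      · have hc : IsCoprime ((u - 1) ^ p) l :=
          (((hlirr.coprime_iff_not_dvd).2 hlu).symm).pow_left
        have hpz : φ ((u - 1) ^ p) (x : AlgebraicClosure (RatFunc Fq)) = 0 := by
          have h1 := hstep x hx p
          rw [← hσ, pow_orderOf_eq_one, hσ] at h1
          rw [sub_pow_char, one_pow, map_sub, map_one]
          change φ (u ^ p) (x : AlgebraicClosure (RatFunc Fq)) - x = 0
          rw [← h1]
          simp
        obtain ⟨s, t, hst⟩ := hc
        have hx0 : (x : AlgebraicClosure (RatFunc Fq)) = 0 := by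
          have h2 : φ (s * (u - 1) ^ p + t * l) (x : AlgebraicClosure (RatFunc Fq)) = x := by
            rw [hst, map_one]; rfl
          rw [map_add, map_mul, map_mul] at h2
          change φ s (φ ((u - 1) ^ p) (x : AlgebraicClosure (RatFunc Fq))) +
            φ t (φ l (x : AlgebraicClosure (RatFunc Fq))) = x at h2
          rw [hpz, hx, map_zero, map_zero, add_zero] at h2
          exact h2.symm
        have : x = 0 := Subtype.ext hx0
        rw [this, map_zero]
    have hσ1 : σ = 1 := by
      have hle : Ll ≤ IntermediateField.lift (IntermediateField.fixedField (Subgroup.zpowers σ)) := by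
        conv_lhs => rw [hLl]
        rw [IntermediateField.adjoin_le_iff]
        intro x hx
        have hxL : x ∈ Ll := by rw [hLl]; exact IntermediateField.subset_adjoin _ _ hx
        have : (⟨x, hxL⟩ : Ll) ∈ IntermediateField.fixedField (Subgroup.zpowers σ) := by
          rw [IntermediateField.mem_fixedField_iff]
          intro g hg
          have hle2 : Subgroup.zpowers σ ≤ MulAction.stabilizer (Ll ≃ₐ[L] Ll) (⟨x, hxL⟩ : Ll) := by
            rw [Subgroup.zpowers_le]
            exact hone ⟨x, hxL⟩ hx
          exact hle2 hg
        exact (IntermediateField.mem_lift (⟨x, hxL⟩ : Ll)).2 this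
      ext y
      have hy := (IntermediateField.mem_lift y).1 (hle y.2)
      rw [IntermediateField.mem_fixedField_iff] at hy
      rw [hy σ (Subgroup.mem_zpowers σ)]
      rfl
    rw [hσ1, orderOf_one] at hσ
    exact hp.one_lt.ne hσ
  -- averaging
  let β : Ll := ⟨α, hαL⟩
  let t : L := Algebra.trace L Ll β
  have ht : φ l (t : AlgebraicClosure (RatFunc Fq)) = Nat.card (Ll ≃ₐ[L] Ll) • a := by
    have h1 : algebraMap L Ll t = ∑ σ : Ll ≃ₐ[L] Ll, σ β := trace_eq_sum_automorphisms β
    have h2 : (t : AlgebraicClosure (RatFunc Fq)) =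
        ∑ σ : Ll ≃ₐ[L] Ll, ((σ β : Ll) : AlgebraicClosure (RatFunc Fq)) := by
      have := congrArg (Ll.val) h1
      rw [map_sum] at this
      exact this
    rw [h2, map_sum]
    have h3 : ∀ σ : Ll ≃ₐ[L] Ll, φ l ((σ β : Ll) : AlgebraicClosure (RatFunc Fq)) = a := by
      intro σ
      rw [DKB.phi_coe hφ l σ β (by change φ l α ∈ L; rw [hα]; exact hΓL a ha)]
      exact hα
    rw [Finset.sum_congr rfl (fun σ _ => h3 σ), Finset.sum_const, Finset.card_univ,
      Nat.card_eq_fintype_card]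
  have hpa : (p : ℤ) • a = 0 := by
    have h2 := congrArg ((algebraMap (RatFunc Fq) (AlgebraicClosure (RatFunc Fq))).comp
      (RatFunc.C : Fq →+* RatFunc Fq)) (CharP.cast_eq_zero Fq p)
    rw [map_natCast, map_zero] at h2
    rw [natCast_zsmul, nsmul_eq_mul, h2, zero_mul]
  have hcp : IsCoprime (p : ℤ) (Nat.card (Ll ≃ₐ[L] Ll) : ℤ) :=
    Nat.isCoprime_iff_coprime.2 ((Nat.Prime.coprime_iff_not_dvd hp).2 hcop)
  obtain ⟨r, s, hrs⟩ := hcp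
  have hα' : φ l (s • (t : AlgebraicClosure (RatFunc Fq))) = a := by
    rw [map_zsmul, ht, ← natCast_zsmul, smul_smul]
    have : s * (Nat.card (Ll ≃ₐ[L] Ll) : ℤ) = 1 - r * p := by rw [← hrs]; ring
    rw [this, sub_smul, mul_smul, hpa, smul_zero, sub_zero, one_smul]
  set α' := s • (t : AlgebraicClosure (RatFunc Fq)) with hα'def
  have hα'L : α' ∈ L := zsmul_mem t.2 s
  have hδ := heΓ α' hα'L (by rw [hα']; exact ha)
  -- Bezout
  obtain ⟨u, v, huv⟩ : ∃ u v : Polynomial Fq, d = u * e + v * l := by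
    have hg : EuclideanDomain.gcd e l ∣ d := 
      hd3 _ (EuclideanDomain.gcd_dvd_left e l) (EuclideanDomain.gcd_dvd_right e l)
    obtain ⟨w, hw⟩ := hg
    refine ⟨w * EuclideanDomain.gcdA e l, w * EuclideanDomain.gcdB e l, ?_⟩
    rw [hw, EuclideanDomain.gcd_eq_gcd_ab]
    ring
  refine ⟨φ u (φ e α') + φ v a, Γ.add_mem (hΓA u _ hδ) (hΓA v _ ha), ?_⟩
  have hcm : ∀ f g : Polynomial Fq, ∀ x, φ f (φ g x) = φ (f * g) x := by
    intro f g x; rw [map_mul]; rfl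
  rw [← hα', map_add, hcm, hcm, hcm, hcm, hcm]
  have : d * l = l * (u * e) + l * (v * l) := by rw [huv]; ring
  rw [this, map_add]
  simp only [mul_assoc]
  rfl
end

section
/- Let Γ be a free A-submodule of (L,+) of rank r with basis {a_1, …, a_r}. Then for all but finitely many monic irreducible polynomials l of A, the elements a_1, …, a_r are linearly independent modulo φ_l(L) over A/lA, and consequently H_Γ(l) = Gal(L(Λ_l^φ, (1/l)Γ)/L(Λ_l^φ)) is isomorphic as an A-module to the direct product Λ_l^φ × ⋯ × Λ_l^φ of r copies of Λ_l^φ. -/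
open Polynomial IntermediateField

set_option synthInstance.maxHeartbeats 1000000
set_option maxHeartbeats 1000000

set_option linter.unusedSectionVars false

section Carlitz

variable {Fq : Type} [Field Fq] [Fintype Fq]

lemma DK.frob_add {R : Type} [CommRing R] [Algebra Fq R] (x y : R) :
    (x + y) ^ Fintype.card Fq = x ^ Fintype.card Fq + y ^ Fintype.card Fq :=
  map_add (FiniteField.frobeniusAlgHom Fq R) x y

lemma DK.frob_sum {R : Type} [CommRing R] [Algebra Fq R] {ι : Type} (s : Finset ι) (f : ι → R) :
    (∑ i ∈ s, f i) ^ Fintype.card Fq = ∑ i ∈ s, f i ^ Fintype.card Fq :=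
  map_sum (FiniteField.frobeniusAlgHom Fq R) f s

/-- Coefficients of the Carlitz module: `C_{T^n} = ∑ ce n j τ^j`. -/
noncomputable def DK.ce (Fq : Type) [Field Fq] [Fintype Fq] : ℕ → ℕ → Polynomial Fq
  | 0, 0 => 1
  | 0, _ + 1 => 0
  | n + 1, 0 => X * DK.ce Fq n 0
  | n + 1, j + 1 => X * DK.ce Fq n (j + 1) + DK.ce Fq n j ^ Fintype.card Fq

lemma DK.ce_gt (n j : ℕ) (h : n < j) : DK.ce Fq n j = 0 := by
  induction n generalizing j with
  | zero => obtain ⟨j, rfl⟩ := Nat.exists_eq_succ_of_ne_zero h.ne'; simp [DK.ce]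
  | succ n ih =>
    obtain ⟨j, rfl⟩ := Nat.exists_eq_succ_of_ne_zero (by omega : j ≠ 0)
    rw [DK.ce, ih _ (by omega), ih _ (by omega), zero_pow Fintype.card_ne_zero]; simp

lemma DK.ce_self (n : ℕ) : DK.ce Fq n n = 1 := by
  induction n with
  | zero => simp [DK.ce]
  | succ n ih => rw [DK.ce, ih, DK.ce_gt _ _ (by omega)]; simp

lemma DK.ce_zero (n : ℕ) : DK.ce Fq n 0 = X ^ n := by
  induction n with
  | zero => simp [DK.ce]
  | succ n ih => rw [DK.ce, ih, pow_succ']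

lemma DK.ce_succ (n j : ℕ) : DK.ce Fq (n + 1) (j + 1) =
    X * DK.ce Fq n (j + 1) + DK.ce Fq n j ^ Fintype.card Fq := by rw [DK.ce]

lemma DK.ce_right (n j : ℕ) : DK.ce Fq (n + 1) (j + 1) =
    X ^ Fintype.card Fq ^ (j + 1) * DK.ce Fq n (j + 1) + DK.ce Fq n j := by
  induction n generalizing j with
  | zero => 
    cases j with
    | zero => simp [DK.ce]
    | succ j => simp [DK.ce, Fintype.card_ne_zero]
  | succ n ih =>
    rw [DK.ce_succ (n + 1) j]
    cases j with
    | zero =>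
      have h1 := ih 0
      have h2 := DK.ce_succ (Fq := Fq) n 0
      rw [DK.ce_zero] at h1 h2 ⊢
      linear_combination X * h1 - X ^ (Fintype.card Fq ^ (0 + 1)) * h2
    | succ j =>
      have h1 := ih (j + 1)
      have h2 := DK.ce_succ (Fq := Fq) n (j + 1)
      have h3 := DK.ce_succ (Fq := Fq) n j
      have hF : DK.ce Fq (n + 1) (j + 1) ^ Fintype.card Fq = X ^ Fintype.card Fq ^ (j + 1 + 1) *
          DK.ce Fq n (j + 1) ^ Fintype.card Fq + DK.ce Fq n j ^ Fintype.card Fq := by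
        rw [ih j, DK.frob_add, mul_pow, ← pow_mul, ← pow_succ]
      linear_combination X * h1 + hF - X ^ Fintype.card Fq ^ (j + 1 + 1) * h2 - h3

noncomputable def DK.cc (f : Polynomial Fq) (j : ℕ) : Polynomial Fq :=
  ∑ n ∈ f.support, C (f.coeff n) * DK.ce Fq n j

lemma DK.cc_gt (f : Polynomial Fq) (j : ℕ) (h : f.natDegree < j) : DK.cc f j = 0 := by
  unfold DK.cc
  refine Finset.sum_eq_zero fun n hn => ?_
  rw [DK.ce_gt _ _ ((le_natDegree_of_mem_supp n hn).trans_lt h), mul_zero]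

lemma DK.cc_zero (f : Polynomial Fq) : DK.cc f 0 = f := by
  unfold DK.cc
  simp_rw [DK.ce_zero]
  exact f.as_sum_support_C_mul_X_pow.symm

lemma DK.cc_natDegree (f : Polynomial Fq) (hf : f.Monic) : DK.cc f f.natDegree = 1 := by
  unfold DK.cc
  rw [Finset.sum_eq_single f.natDegree]
  · rw [DK.ce_self, hf.coeff_natDegree]; simp
  · intro n hn hne
    rw [DK.ce_gt _ _ (lt_of_le_of_ne (le_natDegree_of_mem_supp n hn) hne), mul_zero]
  · intro h
    simp [hf.ne_zero] at h

lemma DK.cc_rec (f : Polynomial Fq) (j : ℕ) :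
    DK.cc f (j + 1) * (X ^ Fintype.card Fq ^ (j + 1) - X)
      = DK.cc f j ^ Fintype.card Fq - DK.cc f j := by
  unfold DK.cc
  rw [DK.frob_sum, Finset.sum_mul, ← Finset.sum_sub_distrib]
  refine Finset.sum_congr rfl fun n _ => ?_
  rw [mul_pow, ← C_pow, FiniteField.pow_card, mul_assoc, ← mul_sub]
  congr 1
  have h1 := DK.ce_right (Fq := Fq) n j
  rw [DK.ce] at h1
  linear_combination -h1

/-- divisibility of the middle coefficients -/
lemma DK.dvd_cc (l : Polynomial Fq) (hl : Irreducible l) (j : ℕ) (hj : j < l.natDegree) :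
    l ∣ DK.cc l j := by
  induction j with
  | zero => rw [DK.cc_zero]
  | succ j ih =>
    have h1 := ih (by omega)
    have h2 : l ∣ DK.cc l (j + 1) * (X ^ Fintype.card Fq ^ (j + 1) - X) := by
      rw [DK.cc_rec]
      exact dvd_sub (dvd_pow h1 Fintype.card_ne_zero) h1
    rcases hl.prime.dvd_or_dvd h2 with h | h
    · exact h
    · exfalso
      rw [← Nat.card_eq_fintype_card] at h
      have := hl.natDegree_dvd_of_dvd_X_pow_card_pow_sub_X h
      have := Nat.le_of_dvd (by omega) this
      omega

/-- The Carlitz polynomial `C_l(X)/X`. -/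
noncomputable def DK.QQ (l : Polynomial Fq) : Polynomial (Polynomial Fq) :=
  ∑ j ∈ Finset.range (l.natDegree + 1), C (DK.cc l j) * X ^ (Fintype.card Fq ^ j - 1)

lemma DK.QQ_eq (l : Polynomial Fq) (hl : l.Monic) : DK.QQ l =
    X ^ (Fintype.card Fq ^ l.natDegree - 1) +
    ∑ j ∈ Finset.range l.natDegree, C (DK.cc l j) * X ^ (Fintype.card Fq ^ j - 1) := by
  rw [DK.QQ, Finset.sum_range_succ, DK.cc_natDegree l hl]; simp [add_comm]

lemma DK.QQ_deg_lt (l : Polynomial Fq) : degree (∑ j ∈ Finset.range l.natDegree,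
    C (DK.cc l j) * X ^ (Fintype.card Fq ^ j - 1)) <
      ((Fintype.card Fq ^ l.natDegree - 1 : ℕ) : WithBot ℕ) := by
  refine (degree_sum_le _ _).trans_lt ?_
  rw [Finset.sup_lt_iff (WithBot.bot_lt_coe _)]
  intro j hj
  refine (degree_C_mul_X_pow_le _ _).trans_lt ?_
  have h1 := Nat.pow_lt_pow_right (Fintype.one_lt_card (α := Fq)) (Finset.mem_range.1 hj)
  have h2 := Nat.one_le_pow j _ (Fintype.card_pos (α := Fq))
  exact_mod_cast (by omega)

lemma DK.QQ_monic (l : Polynomial Fq) (hl : l.Monic) : (DK.QQ l).Monic := by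
  rw [DK.QQ_eq l hl]
  exact monic_X_pow_add (DK.QQ_deg_lt l)

lemma DK.QQ_natDegree (l : Polynomial Fq) (hl : l.Monic) :
    (DK.QQ l).natDegree = Fintype.card Fq ^ l.natDegree - 1 := by
  rw [DK.QQ_eq l hl]
  apply natDegree_eq_of_degree_eq_some
  rw [degree_add_eq_left_of_degree_lt] <;> rw [degree_X_pow]
  exact DK.QQ_deg_lt l

lemma DK.one_lt_qpow (j : ℕ) (hj : j ≠ 0) : 1 < Fintype.card Fq ^ j :=
  Nat.one_lt_pow hj (Fintype.one_lt_card (α := Fq))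

lemma DK.QQ_coeff_zero (l : Polynomial Fq) : (DK.QQ l).coeff 0 = l := by
  rw [DK.QQ, finsetSum_coeff, Finset.sum_eq_single 0]
  · simp [DK.cc_zero]
  · intro j _ hj
    rw [coeff_C_mul_X_pow, if_neg]
    have := DK.one_lt_qpow (Fq := Fq) j hj
    omega
  · simp

lemma DK.QQ_irreducible (l : Polynomial Fq) (hl : l.Monic) (hi : Irreducible l) :
    Irreducible (DK.QQ l) := by
  have hd : l.natDegree ≠ 0 := hi.natDegree_pos.ne'
  have h1 := DK.one_lt_qpow (Fq := Fq) _ hd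
  have hE : (DK.QQ l).IsEisensteinAt (Ideal.span {l}) := by
    refine ⟨?_, ?_, ?_⟩
    · rw [(DK.QQ_monic l hl).leadingCoeff, Ideal.mem_span_singleton]
      exact fun h => hi.not_isUnit (isUnit_of_dvd_one h)
    · intro n hn
      rw [DK.QQ_natDegree l hl] at hn
      rw [DK.QQ_eq l hl, coeff_add, coeff_X_pow, if_neg (by omega), zero_add, finsetSum_coeff]
      refine Ideal.sum_mem _ fun j hj => ?_
      rw [coeff_C_mul]
      exact Ideal.mul_mem_right _ _
        (Ideal.mem_span_singleton.2 (DK.dvd_cc l hi j (Finset.mem_range.1 hj)))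
    · rw [DK.QQ_coeff_zero, Ideal.span_singleton_pow, Ideal.mem_span_singleton]
      rintro ⟨c, hc⟩
      apply hi.not_isUnit
      have : l * 1 = l * (l * c) := by rw [mul_one]; linear_combination hc
      exact isUnit_of_dvd_one ⟨c, mul_left_cancel₀ hi.ne_zero this⟩
  refine hE.irreducible ?_ (DK.QQ_monic l hl).isPrimitive ?_
  · rw [Ideal.span_singleton_prime hi.ne_zero]; exact hi.prime
  · rw [DK.QQ_natDegree l hl]; omega

end Carlitz

section Phi

variable {Fq : Type} [Field Fq] [Fintype Fq] {K : Type} [Field K] [Algebra (Polynomial Fq) K]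

lemma DK.frob_addK (Fq : Type) [Field Fq] [Fintype Fq] {K : Type} [Field K]
    [Algebra (Polynomial Fq) K] (x y : K) :
    (x + y) ^ Fintype.card Fq = x ^ Fintype.card Fq + y ^ Fintype.card Fq := by
  let _ : Algebra Fq K := ((algebraMap (Polynomial Fq) K).comp C).toAlgebra
  exact DK.frob_add x y

lemma DK.frob_sumK (Fq : Type) [Field Fq] [Fintype Fq] {K : Type} [Field K]
    [Algebra (Polynomial Fq) K] {ι : Type} (s : Finset ι) (f : ι → K) :
    (∑ i ∈ s, f i) ^ Fintype.card Fq = ∑ i ∈ s, f i ^ Fintype.card Fq := by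
  let _ : Algebra Fq K := ((algebraMap (Polynomial Fq) K).comp C).toAlgebra
  exact DK.frob_sum s f

lemma DK.card_zeroK (Fq : Type) [Field Fq] [Fintype Fq] {K : Type} [Field K]
    [Algebra (Polynomial Fq) K] : ((Fintype.card Fq : ℕ) : K) = 0 := by
  have h : ((Fintype.card Fq : ℕ) : Fq) = 0 := FiniteField.cast_card_eq_zero Fq
  have h2 := congrArg ((algebraMap (Polynomial Fq) K).comp C) h
  rwa [map_natCast, map_zero] at h2

/-- The defining property of a rank one Drinfeld module, over a general field. -/
def DK.Car (φ : Polynomial Fq →+* AddMonoid.End K) (a : K) : Prop :=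
  (∀ α, φ X α = algebraMap (Polynomial Fq) K X * α + a * α ^ Fintype.card Fq) ∧
  (∀ (c : Fq) (α), φ (C c) α = algebraMap (Polynomial Fq) K (C c) * α)

variable {φ : Polynomial Fq →+* AddMonoid.End K} {a : K}

lemma DK.phi_mul (φ : Polynomial Fq →+* AddMonoid.End K) (f g : Polynomial Fq) (x : K) :
    φ (f * g) x = φ f (φ g x) := by
  rw [map_mul]; rfl

lemma DK.phi_add (φ : Polynomial Fq →+* AddMonoid.End K) (f g : Polynomial Fq) (x : K) :
    φ (f + g) x = φ f x + φ g x := by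
  rw [map_add]; rfl

lemma DK.phi_sum {ι : Type} (φ : Polynomial Fq →+* AddMonoid.End K) (s : Finset ι)
    (f : ι → Polynomial Fq) (x : K) : φ (∑ i ∈ s, f i) x = ∑ i ∈ s, φ (f i) x := by
  rw [map_sum]; exact AddMonoidHom.finsetSum_apply _ _ _

lemma DK.phi_comm (φ : Polynomial Fq →+* AddMonoid.End K) (f g : Polynomial Fq) (x : K) :
    φ f (φ g x) = φ g (φ f x) := by
  rw [← DK.phi_mul, mul_comm, DK.phi_mul]

lemma DK.phi_pow (h : DK.Car φ a) {b : K} (hb : b ^ (Fintype.card Fq - 1) = a) (n : ℕ) (x : K)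
    (N : ℕ) (hN : n ≤ N) :
    b * φ (X ^ n) x = ∑ j ∈ Finset.range (N + 1),
      algebraMap (Polynomial Fq) K (DK.ce Fq n j) * (b * x) ^ Fintype.card Fq ^ j := by
  have hq : b ^ Fintype.card Fq = b * a := by
    rw [← hb, ← pow_succ', Nat.sub_add_cancel Fintype.card_pos]
  induction n generalizing N with
  | zero =>
    rw [Finset.sum_eq_single 0]
    · simp [DK.ce_zero]
    · intro j _ hj
      rw [DK.ce_gt _ _ (by omega)]; simp
    · simp
  | succ n ih =>
    obtain ⟨N, rfl⟩ := Nat.exists_eq_succ_of_ne_zero (by omega : N ≠ 0)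
    rw [pow_succ', DK.phi_mul, h.1]
    have h1 : b * (algebraMap (Polynomial Fq) K X * φ (X ^ n) x +
        a * (φ (X ^ n) x) ^ Fintype.card Fq) =
        algebraMap (Polynomial Fq) K X * (b * φ (X ^ n) x) +
          (b * φ (X ^ n) x) ^ Fintype.card Fq := by
      rw [mul_pow, hq]; ring
    rw [h1]
    conv_lhs =>
      congr
      · rw [ih (N + 1) (by omega), Finset.sum_range_succ', mul_add, Finset.mul_sum]
      · rw [ih N (by omega), DK.frob_sumK Fq]
    rw [Finset.sum_range_succ' _ (N + 1), add_right_comm, ← Finset.sum_add_distrib]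
    congr 1
    · refine Finset.sum_congr rfl fun j _ => ?_
      rw [DK.ce_succ, map_add, map_mul, map_pow]
      generalize b * x = z
      ring
    · rw [DK.ce_zero, DK.ce_zero, pow_succ', map_mul]; ring

lemma DK.phi_formula (h : DK.Car φ a) {b : K} (hb : b ^ (Fintype.card Fq - 1) = a)
    (f : Polynomial Fq) (x : K) (N : ℕ) (hN : f.natDegree ≤ N) :
    b * φ f x = ∑ j ∈ Finset.range (N + 1),
      algebraMap (Polynomial Fq) K (DK.cc f j) * (b * x) ^ Fintype.card Fq ^ j := by
  conv_lhs => rw [f.as_sum_support_C_mul_X_pow, DK.phi_sum, Finset.mul_sum]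
  have : ∀ n ∈ f.support, b * φ (C (f.coeff n) * X ^ n) x = ∑ j ∈ Finset.range (N + 1),
      algebraMap (Polynomial Fq) K (C (f.coeff n) * DK.ce Fq n j) *
        (b * x) ^ Fintype.card Fq ^ j := by
    intro n hn
    rw [DK.phi_mul, h.2, mul_left_comm,
      DK.phi_pow h hb n x N ((le_natDegree_of_mem_supp n hn).trans hN), Finset.mul_sum]
    refine Finset.sum_congr rfl fun j _ => ?_
    rw [map_mul]; ring
  rw [Finset.sum_congr rfl this, Finset.sum_comm]
  refine Finset.sum_congr rfl fun j _ => ?_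
  rw [DK.cc, map_sum, Finset.sum_mul]

/-- the torsion relation with `QQ`. -/
lemma DK.phi_QQ (h : DK.Car φ a) {b : K} (hb : b ^ (Fintype.card Fq - 1) = a)
    (l : Polynomial Fq) (x : K) :
    b * φ l x = (b * x) * aeval (b * x) (DK.QQ l) := by
  rw [DK.phi_formula h hb l x _ le_rfl, DK.QQ, map_sum, Finset.mul_sum]
  refine Finset.sum_congr rfl fun j _ => ?_
  have h2 := Nat.one_le_pow j _ (Fintype.card_pos (α := Fq))
  rw [map_mul, aeval_C, map_pow, aeval_X, mul_left_comm, ← pow_succ', Nat.sub_add_cancel h2]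

/-- Uniform integrality. -/
lemma DK.ce_int {I : Subring K} {s : K} (hs : s ∈ I)
    (hsT : s * algebraMap (Polynomial Fq) K X ∈ I) (n j : ℕ) (hj : j ≤ n) :
    algebraMap (Polynomial Fq) K (DK.ce Fq n j) *
      s ^ (Fintype.card Fq ^ n - Fintype.card Fq ^ j) ∈ I := by
  have hq := Fintype.one_lt_card (α := Fq)
  induction n generalizing j with
  | zero =>
    obtain rfl : j = 0 := by omega
    simp [DK.ce, I.one_mem]
  | succ n ih =>
    have hT : ∀ i, i ≤ n → algebraMap (Polynomial Fq) K (X * DK.ce Fq n i) *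
        s ^ (Fintype.card Fq ^ (n + 1) - Fintype.card Fq ^ i) ∈ I := by
      intro i hi
      have h1 : Fintype.card Fq ^ n < Fintype.card Fq ^ (n + 1) :=
        Nat.pow_lt_pow_right hq (by omega)
      have h2 : Fintype.card Fq ^ i ≤ Fintype.card Fq ^ n := Nat.pow_le_pow_right (by omega) hi
      have h3 : Fintype.card Fq ^ (n + 1) - Fintype.card Fq ^ i =
        (Fintype.card Fq ^ n - Fintype.card Fq ^ i) +
          ((Fintype.card Fq ^ (n + 1) - Fintype.card Fq ^ n - 1) + 1) := by omega
      rw [h3, pow_add, pow_succ, map_mul]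
      have := I.mul_mem (I.mul_mem hsT (ih i hi))
        (I.pow_mem hs (Fintype.card Fq ^ (n + 1) - Fintype.card Fq ^ n - 1))
      convert this using 1; ring
    cases j with
    | zero => 
      rw [DK.ce_zero, pow_succ', ← DK.ce_zero]
      exact hT 0 (by omega)
    | succ j =>
      rw [DK.ce_succ, map_add, add_mul]
      refine I.add_mem ?_ ?_
      · by_cases hjn : j + 1 ≤ n
        · exact hT _ hjn
        · rw [DK.ce_gt _ _ (by omega)]; simp
      · have := I.pow_mem (ih j (by omega)) (Fintype.card Fq)
        rw [mul_pow, ← pow_mul, Nat.sub_mul, ← pow_succ, ← pow_succ] at this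
        rwa [map_pow]

lemma DK.cc_int {I : Subring K} {s : K} (hs : s ∈ I)
    (hsT : s * algebraMap (Polynomial Fq) K X ∈ I)
    (hC : ∀ c : Fq, algebraMap (Polynomial Fq) K (C c) ∈ I)
    (f : Polynomial Fq) (N : ℕ) (hN : f.natDegree ≤ N) (j : ℕ) (hj : j ≤ N) :
    algebraMap (Polynomial Fq) K (DK.cc f j) *
      s ^ (Fintype.card Fq ^ N - Fintype.card Fq ^ j) ∈ I := by
  rw [DK.cc, map_sum, Finset.sum_mul]
  refine I.sum_mem fun n hn => ?_
  rw [map_mul, mul_assoc]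
  refine I.mul_mem (hC _) ?_
  by_cases hjn : j ≤ n
  · have h1 : Fintype.card Fq ^ n ≤ Fintype.card Fq ^ N :=
      Nat.pow_le_pow_right Fintype.card_pos ((le_natDegree_of_mem_supp n hn).trans hN)
    have h2 : Fintype.card Fq ^ j ≤ Fintype.card Fq ^ n :=
      Nat.pow_le_pow_right Fintype.card_pos hjn
    have h3 : Fintype.card Fq ^ N - Fintype.card Fq ^ j =
      (Fintype.card Fq ^ n - Fintype.card Fq ^ j) +
      (Fintype.card Fq ^ N - Fintype.card Fq ^ n) := by omega
    rw [h3, pow_add, ← mul_assoc]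
    exact I.mul_mem (DK.ce_int hs hsT n j hjn) (I.pow_mem hs _)
  · rw [DK.ce_gt _ _ (by omega)]; simp

lemma DK.phi_int_aux (h : DK.Car φ a) {b : K} (hb : b ^ (Fintype.card Fq - 1) = a) (s : K)
    (f : Polynomial Fq) (N : ℕ) (hN : f.natDegree ≤ N) (x : K) :
    s ^ Fintype.card Fq ^ N * (b * φ f x) = ∑ j ∈ Finset.range (N + 1),
      (algebraMap (Polynomial Fq) K (DK.cc f j) *
        s ^ (Fintype.card Fq ^ N - Fintype.card Fq ^ j)) *
      (s * (b * x)) ^ Fintype.card Fq ^ j := by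
  rw [DK.phi_formula h hb f x N hN, Finset.mul_sum]
  refine Finset.sum_congr rfl fun j hj => ?_
  have h2 : Fintype.card Fq ^ j ≤ Fintype.card Fq ^ N :=
      Nat.pow_le_pow_right Fintype.card_pos (by have := Finset.mem_range.1 hj; omega)
  rw [mul_pow s]
  have : s ^ Fintype.card Fq ^ N = s ^ (Fintype.card Fq ^ N - Fintype.card Fq ^ j) *
    s ^ Fintype.card Fq ^ j := by rw [← pow_add, Nat.sub_add_cancel h2]
  rw [this]; ring

lemma DK.phi_int (h : DK.Car φ a) {b : K} (hb : b ^ (Fintype.card Fq - 1) = a)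
    {I : Subring K} (hI : ∀ x : K, IsIntegral I x → x ∈ I) {s : K} (hs : s ∈ I)
    (hsT : s * algebraMap (Polynomial Fq) K X ∈ I)
    (hC : ∀ c : Fq, algebraMap (Polynomial Fq) K (C c) ∈ I)
    {r : ℕ} (α : Fin r → K) (hα : ∀ i, s * (b * α i) ∈ I)
    (l : Polynomial Fq) (hl : l.Monic) (g : Fin r → Polynomial Fq)
    (hg : ∀ i, (g i).natDegree ≤ l.natDegree) (w : K) (hw : φ l w = ∑ i, φ (g i) (α i)) :
    s * (b * w) ∈ I := by
  have hy : s ^ Fintype.card Fq ^ l.natDegree * (b * φ l w) ∈ I := by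
    rw [hw, Finset.mul_sum, Finset.mul_sum]
    refine I.sum_mem fun i _ => ?_
    rw [DK.phi_int_aux h hb s _ _ (hg i)]
    exact I.sum_mem fun j hj => I.mul_mem (DK.cc_int hs hsT hC _ _ (hg i) _
      (by have := Finset.mem_range.1 hj; omega)) (I.pow_mem (hα i) _)
  have heq := DK.phi_int_aux h hb s l _ le_rfl w
  rw [Finset.sum_range_succ, DK.cc_natDegree l hl] at heq
  apply hI
  let cI : ℕ → I := fun j => if hj : j ≤ l.natDegree then
    ⟨_, DK.cc_int hs hsT hC l _ le_rfl j hj⟩ else 0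
  let P : Polynomial I := X ^ Fintype.card Fq ^ l.natDegree +
    (∑ j ∈ Finset.range l.natDegree, C (cI j) * X ^ Fintype.card Fq ^ j - C ⟨_, hy⟩)
  refine ⟨P, ?_, ?_⟩
  · apply monic_X_pow_add
    have h0 : (0 : WithBot ℕ) < ((Fintype.card Fq ^ l.natDegree : ℕ) : WithBot ℕ) := by
      exact_mod_cast Nat.pow_pos Fintype.card_pos
    refine (degree_sub_le _ _).trans_lt (max_lt ?_ (degree_C_le.trans_lt h0))
    refine (degree_sum_le _ _).trans_lt ?_
    rw [Finset.sup_lt_iff (WithBot.bot_lt_coe _)]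
    intro j hj
    refine (degree_C_mul_X_pow_le _ _).trans_lt ?_
    exact_mod_cast Nat.pow_lt_pow_right (Fintype.one_lt_card (α := Fq)) (Finset.mem_range.1 hj)
  · simp only [P, eval₂_add, eval₂_sub, eval₂_X_pow, eval₂_finsetSum, eval₂_mul, eval₂_C]
    have : ∀ j ∈ Finset.range l.natDegree, (algebraMap I K) (cI j) *
        (s * (b * w)) ^ Fintype.card Fq ^ j = (algebraMap (Polynomial Fq) K (DK.cc l j) *
        s ^ (Fintype.card Fq ^ l.natDegree - Fintype.card Fq ^ j)) *
        (s * (b * w)) ^ Fintype.card Fq ^ j := by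
      intro j hj
      simp only [cI]
      rw [dif_pos (Finset.mem_range.1 hj).le]
      rfl
    rw [Finset.sum_congr rfl this]
    change _ + (_ - s ^ Fintype.card Fq ^ l.natDegree * (b * φ l w)) = 0
    rw [heq]
    simp

end Phi

section Fin

variable {Fq : Type} [Field Fq] [Fintype Fq] {K : Type} [Field K] [Algebra (Polynomial Fq) K]
  [Algebra (RatFunc Fq) K] [IsScalarTower (Polynomial Fq) (RatFunc Fq) K]

lemma DK.finite_deg (Fq : Type) [Field Fq] [Fintype Fq] (M : ℕ) :
    {c : Polynomial Fq | c.natDegree ≤ M}.Finite := by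
  have : Finite (degreeLT Fq (M + 1)) := Finite.of_equiv _ (degreeLTEquiv Fq (M + 1)).toEquiv.symm
  refine (Set.toFinite ((degreeLT Fq (M + 1) : Set (Polynomial Fq)))).subset ?_
  intro c hc
  simp only [SetLike.mem_coe, mem_degreeLT]
  exact degree_le_natDegree.trans_lt (by exact_mod_cast Nat.lt_succ_of_le hc)

lemma DK.coeff_int {B k : Type} [CommRing B] [IsDomain B] [IsIntegrallyClosed B] [Field k]
    [Algebra B k] [IsFractionRing B k] [Algebra B K] [Algebra k K] [IsScalarTower B k K]
    {u : K} (hu : IsIntegral B u) (i : ℕ) :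
    (minpoly k u).coeff i = algebraMap B k ((minpoly B u).coeff i) := by
  rw [minpoly.isIntegrallyClosed_eq_field_fractions' k hu, coeff_map]

lemma DK.finite_bdd {B : Type} [CommRing B] [IsDomain B] [IsIntegrallyClosed B]
    [Algebra B (RatFunc Fq)] [IsFractionRing B (RatFunc Fq)] [Algebra B K]
    [IsScalarTower B (RatFunc Fq) K]
    (hB : ∀ c : B, algebraMap B (RatFunc Fq) c ≠ 0 → (algebraMap B (RatFunc Fq) c).intDegree ≤ 0)
    (D : Polynomial Fq) (hD : D ≠ 0) (s : B) (hs : s ≠ 0) (n0 : ℕ) :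
    {w : K | (minpoly (RatFunc Fq) w).natDegree ≤ n0 ∧
      IsIntegral (Polynomial Fq) (algebraMap (Polynomial Fq) K D * w) ∧
      IsIntegral B (algebraMap B K s * w)}.Finite := by
  classical
  set D' : RatFunc Fq := algebraMap _ _ D with hD'
  set s' : RatFunc Fq := algebraMap _ _ s with hs'
  have hD0 : D' ≠ 0 := by simpa [hD'] using hD
  have hs0 : s' ≠ 0 := by
    simpa [hs'] using hs
  set t := s' / D' with ht
  have ht0 : t ≠ 0 := div_ne_zero hs0 hD0
  have key := bUnion_roots_finite (algebraMap (Polynomial Fq) K) n0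
    (DK.finite_deg Fq (t.intDegree.natAbs * n0))
  have hinj : Function.Injective (fun w : K => algebraMap (RatFunc Fq) K D' * w) := by
    intro x y hxy
    exact mul_left_cancel₀ (by simpa using hD0) hxy
  refine (key.preimage hinj.injOn).subset ?_
  rintro w ⟨hn, hA, hBw⟩
  have e1 : algebraMap (Polynomial Fq) K D = algebraMap (RatFunc Fq) K D' :=
    IsScalarTower.algebraMap_apply _ _ _ _
  have e2 : algebraMap B K s = algebraMap (RatFunc Fq) K s' :=
    IsScalarTower.algebraMap_apply _ _ _ _
  rw [e1] at hA
  rw [e2] at hBw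
  set u := algebraMap (RatFunc Fq) K D' * w with hu
  have hku : IsIntegral (RatFunc Fq) u := hA.tower_top
  have hsw : algebraMap (RatFunc Fq) K s' * w = t • u := by
    rw [hu, ht, Algebra.smul_def, ← mul_assoc, ← map_mul, div_mul_cancel₀ _ hD0]
  rw [hsw] at hBw
  have hwu : w = D'⁻¹ • u := by
    rw [hu, Algebra.smul_def, ← mul_assoc, ← map_mul, inv_mul_cancel₀ hD0, map_one, one_mul]
  have hdeg : (minpoly (RatFunc Fq) u).natDegree ≤ n0 := by
    rw [hwu, IsIntegrallyClosed.minpoly_smul (inv_ne_zero hD0) hku, natDegree_scaleRoots] at hn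
    exact hn
  have hm : minpoly (RatFunc Fq) u = (minpoly (Polynomial Fq) u).map (algebraMap _ _) :=
    minpoly.isIntegrallyClosed_eq_field_fractions' (RatFunc Fq) hA
  have hdeg' : (minpoly (Polynomial Fq) u).natDegree ≤ n0 := by
    rwa [hm, (minpoly.monic hA).natDegree_map] at hdeg
  simp only [Set.mem_preimage, Set.mem_iUnion]
  refine ⟨minpoly (Polynomial Fq) u, ⟨hdeg', ?_⟩, ?_⟩
  · intro i
    simp only [Set.mem_ofPred_eq]
    set c := (minpoly (Polynomial Fq) u).coeff i with hc
    by_cases hc0 : c = 0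
    · rw [hc0]; simp
    have h1 := DK.coeff_int (k := RatFunc Fq) hBw i
    rw [IsIntegrallyClosed.minpoly_smul ht0 hku, coeff_scaleRoots,
      DK.coeff_int (k := RatFunc Fq) hA i, ← hc] at h1
    have hne : algebraMap (Polynomial Fq) (RatFunc Fq) c ≠ 0 := by simpa using hc0
    have h2 := hB ((minpoly B (t • u)).coeff i) (by
      rw [← h1]; exact mul_ne_zero hne (pow_ne_zero _ ht0))
    rw [← h1, RatFunc.intDegree_mul hne (pow_ne_zero _ ht0), RatFunc.intDegree_polynomial] at h2
    have h3 : ∀ m : ℕ, (t ^ m).intDegree = m * t.intDegree := by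
      intro m
      induction m with
      | zero => simp
      | succ m ih => rw [pow_succ, RatFunc.intDegree_mul (pow_ne_zero _ ht0) ht0, ih]; push_cast; ring
    rw [h3] at h2
    set m := (minpoly (RatFunc Fq) u).natDegree - i with hmdef
    have hmn : m ≤ n0 := by omega
    zify
    have h4 : -(t.intDegree) ≤ |t.intDegree| := neg_le_abs _
    have h5 : (m : ℤ) * -(t.intDegree) ≤ n0 * |t.intDegree| :=
      (mul_le_mul_of_nonneg_left h4 (by positivity)).trans
        (mul_le_mul_of_nonneg_right (by exact_mod_cast hmn) (abs_nonneg _))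
    linarith
  · simp only [SetLike.mem_coe, Multiset.mem_toFinset]
    rw [mem_roots (map_monic_ne_zero (minpoly.monic hA)), IsRoot.def, eval_map_algebraMap]
    exact minpoly.aeval _ _

lemma DK.int_mem {B : Type} [CommRing B] [Algebra B K] (x : K)
    (hx : IsIntegral (integralClosure B K).toSubring x) :
    x ∈ (integralClosure B K).toSubring :=
  isIntegral_trans (R := B) (A := integralClosure B K) x hx

lemma DK.finite_W_aux {B : Type} [CommRing B] [IsDomain B] [IsIntegrallyClosed B]
    [Algebra B (RatFunc Fq)] [IsFractionRing B (RatFunc Fq)] [Algebra B K]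
    [IsScalarTower B (RatFunc Fq) K] [Algebra.IsAlgebraic (RatFunc Fq) K]
    (hB : ∀ c : B, algebraMap B (RatFunc Fq) c ≠ 0 → (algebraMap B (RatFunc Fq) c).intDegree ≤ 0)
    (hBC : ∀ c : Fq, ∃ y : B, algebraMap B (RatFunc Fq) y = RatFunc.C c)
    (hBX : ∃ y : B, algebraMap B (RatFunc Fq) y = RatFunc.X⁻¹)
    {φ : Polynomial Fq →+* AddMonoid.End K} {a : K}
    (h : DK.Car φ a) {b : K} (hb : b ^ (Fintype.card Fq - 1) = a) (hb0 : b ≠ 0)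
    {r : ℕ} (α : Fin r → K) (n0 : ℕ) :
    ∃ W : Set K, W.Finite ∧ ∀ l : Polynomial Fq, l.Monic → ∀ g : Fin r → Polynomial Fq,
      (∀ i, (g i).natDegree ≤ l.natDegree) → ∀ w : K, φ l w = ∑ i, φ (g i) (α i) →
      (minpoly (RatFunc Fq) (b * w)).natDegree ≤ n0 → w ∈ W := by
  classical
  have : Algebra.IsAlgebraic (Polynomial Fq) K :=
    (IsFractionRing.comap_isAlgebraic_iff (A := Polynomial Fq) (K := RatFunc Fq) (C := K)).2 inferInstance
  have : Algebra.IsAlgebraic B K :=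
    (IsFractionRing.comap_isAlgebraic_iff (A := B) (K := RatFunc Fq) (C := K)).2
      inferInstance
  obtain ⟨D, hD0, hD⟩ := Algebra.IsAlgebraic.exists_integral_multiples (Polynomial Fq)
    (Finset.univ.image fun i => b * α i)
  obtain ⟨s, hs0, hs⟩ := Algebra.IsAlgebraic.exists_integral_multiples B
    (Finset.univ.image fun i => b * α i)
  obtain ⟨y, hy⟩ := hBX
  have hy0 : y ≠ 0 := by
    rintro rfl
    rw [map_zero] at hy
    exact inv_ne_zero RatFunc.X_ne_zero hy.symm
  have hfin := DK.finite_bdd (K := K) hB D hD0 (y * s) (mul_ne_zero hy0 hs0) n0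
  refine ⟨_, hfin.preimage (f := fun w => b * w)
    (fun x _ y _ hxy => mul_left_cancel₀ hb0 hxy), ?_⟩
  intro l hl g hg w hw hn
  refine ⟨hn, ?_, ?_⟩
  · refine DK.phi_int (I := (integralClosure (Polynomial Fq) K).toSubring) h hb DK.int_mem
      ?_ ?_ ?_ α ?_ l hl g hg w hw
    · exact isIntegral_algebraMap
    · rw [← map_mul]; exact isIntegral_algebraMap
    · intro c; exact isIntegral_algebraMap
    · intro i
      rw [← Algebra.smul_def]
      exact hD _ (Finset.mem_image_of_mem _ (Finset.mem_univ i))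
  · refine DK.phi_int (I := (integralClosure B K).toSubring) h hb DK.int_mem
      ?_ ?_ ?_ α ?_ l hl g hg w hw
    · exact isIntegral_algebraMap
    · have : algebraMap B K (y * s) * algebraMap (Polynomial Fq) K X = algebraMap B K s := by
        rw [IsScalarTower.algebraMap_apply B (RatFunc Fq) K,
          IsScalarTower.algebraMap_apply B (RatFunc Fq) K,
          IsScalarTower.algebraMap_apply (Polynomial Fq) (RatFunc Fq) K, ← map_mul]
        congr 1
        rw [map_mul, hy, RatFunc.algebraMap_X]
        field_simp [RatFunc.X_ne_zero]
      rw [this]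
      exact isIntegral_algebraMap
    · intro c
      obtain ⟨z, hz⟩ := hBC c
      have : algebraMap (Polynomial Fq) K (C c) = algebraMap B K z := by
        rw [IsScalarTower.algebraMap_apply B (RatFunc Fq) K,
          IsScalarTower.algebraMap_apply (Polynomial Fq) (RatFunc Fq) K, hz, RatFunc.algebraMap_C]
      rw [this]
      exact isIntegral_algebraMap
    · intro i
      rw [map_mul, mul_assoc, ← Algebra.smul_def s]
      exact IsIntegral.mul isIntegral_algebraMap
        (hs _ (Finset.mem_image_of_mem _ (Finset.mem_univ i)))

lemma DK.finite_W [Algebra.IsAlgebraic (RatFunc Fq) K]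
    {φ : Polynomial Fq →+* AddMonoid.End K} {a : K}
    (h : DK.Car φ a) {b : K} (hb : b ^ (Fintype.card Fq - 1) = a) (hb0 : b ≠ 0)
    {r : ℕ} (α : Fin r → K) (n0 : ℕ) :
    ∃ W : Set K, W.Finite ∧ ∀ l : Polynomial Fq, l.Monic → ∀ g : Fin r → Polynomial Fq,
      (∀ i, (g i).natDegree ≤ l.natDegree) → ∀ w : K, φ l w = ∑ i, φ (g i) (α i) →
      (minpoly (RatFunc Fq) (b * w)).natDegree ≤ n0 → w ∈ W := by
  classical
  let V := (RatFunc.inftyValuation Fq).valuationSubring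
  let _ : Algebra V K := ((algebraMap (RatFunc Fq) K).comp (algebraMap V (RatFunc Fq))).toAlgebra
  have : IsScalarTower V (RatFunc Fq) K := IsScalarTower.of_algebraMap_eq fun _ => rfl
  refine DK.finite_W_aux (B := V) ?_ ?_ ?_ h hb hb0 α n0
  · intro c hc
    have h1 : RatFunc.inftyValuation Fq (c : RatFunc Fq) ≤ 1 := c.2
    have hc' : (c : RatFunc Fq) ≠ 0 := hc
    rw [RatFunc.inftyValuation_apply, RatFunc.inftyValuation_of_nonzero _ hc'] at h1
    rw [← WithZero.exp_zero, WithZero.exp_le_exp] at h1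
    exact h1
  · intro c
    refine ⟨⟨RatFunc.C c, ?_⟩, rfl⟩
    rw [Valuation.mem_valuationSubring_iff]
    by_cases hc : c = 0
    · simp [hc]
    · rw [RatFunc.inftyValuation.C _ hc]
  · refine ⟨⟨RatFunc.X⁻¹, ?_⟩, rfl⟩
    rw [Valuation.mem_valuationSubring_iff, ← one_div, RatFunc.inftyValuation.X_inv,
      ← WithZero.exp_zero, WithZero.exp_le_exp]
    norm_num

end Fin

section PartA

variable {Fq : Type} [Field Fq] [Fintype Fq] {K : Type} [Field K] [Algebra (Polynomial Fq) K]
  [Algebra (RatFunc Fq) K] [IsScalarTower (Polynomial Fq) (RatFunc Fq) K]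

lemma DK.partA [Algebra.IsAlgebraic (RatFunc Fq) K]
    (L : IntermediateField (RatFunc Fq) K) [FiniteDimensional (RatFunc Fq) L]
    {φ : Polynomial Fq →+* AddMonoid.End K} {a : K}
    (h : DK.Car φ a) {b : K} (hb : b ^ (Fintype.card Fq - 1) = a) (hb0 : b ≠ 0)
    (Γ : AddSubgroup K) (hΓL : ∀ x ∈ Γ, x ∈ L)
    (hΓA : ∀ (f : Polynomial Fq), ∀ x ∈ Γ, φ f x ∈ Γ)
    (r : ℕ) (α : Fin r → K) (haΓ : ∀ i, α i ∈ Γ)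
    (hgen : ∀ x ∈ Γ, ∃ g : Fin r → Polynomial Fq, x = ∑ i, φ (g i) (α i))
    (hind : ∀ g : Fin r → Polynomial Fq, ∑ i, φ (g i) (α i) = 0 → ∀ i, g i = 0) :
    ∃ M : ℕ, ∀ l : Polynomial Fq, l.Monic → Irreducible l → M < l.natDegree →
      ∀ g : Fin r → Polynomial Fq, (∃ w : K, w ∈ L ∧ φ l w = ∑ i, φ (g i) (α i)) →
          ∀ i, l ∣ g i := by
  classical
  have hbi : IsIntegral (RatFunc Fq) b := Algebra.IsIntegral.isIntegral b
  have := IntermediateField.adjoin.finiteDimensional hbi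
  obtain ⟨W, hW, hWl⟩ := DK.finite_W h hb hb0 α
    (Module.finrank (RatFunc Fq) (L ⊔ (RatFunc Fq)⟮b⟯ : IntermediateField (RatFunc Fq) K))
  have hch : ∀ w : K, ∃ f : Polynomial Fq, f ≠ 0 ∧
      ((∃ f : Polynomial Fq, f ≠ 0 ∧ φ f w ∈ Γ) → φ f w ∈ Γ) := by
    intro w
    by_cases hw : ∃ f : Polynomial Fq, f ≠ 0 ∧ φ f w ∈ Γ
    · obtain ⟨f, hf, hfw⟩ := hw
      exact ⟨f, hf, fun _ => hfw⟩
    · exact ⟨1, one_ne_zero, fun h => absurd h hw⟩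
  choose F hF0 hF using hch
  let N : Polynomial Fq := ∏ w ∈ hW.toFinset, F w
  have hN0 : N ≠ 0 := Finset.prod_ne_zero_iff.2 fun w _ => hF0 w
  refine ⟨N.natDegree, ?_⟩
  intro l hl hi hdeg g ⟨w, hwL, hw⟩ i
  -- reduce modulo l
  let g' : Fin r → Polynomial Fq := fun i => g i %ₘ l
  let w' : K := w - ∑ i, φ (g i /ₘ l) (α i)
  have hsumΓ : ∀ c : Fin r → Polynomial Fq, ∑ i, φ (c i) (α i) ∈ Γ := fun c =>
    Γ.sum_mem fun i _ => hΓA _ _ (haΓ i)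
  have hw' : φ l w' = ∑ i, φ (g' i) (α i) := by
    simp only [w', map_sub, map_sum, hw, ← DK.phi_mul]
    rw [← Finset.sum_sub_distrib]
    refine Finset.sum_congr rfl fun i _ => ?_
    have := modByMonic_add_div (g i) l
    have e : φ (g i) (α i) = φ (g i %ₘ l + l * (g i /ₘ l)) (α i) := by rw [this]
    rw [e, DK.phi_add, add_sub_cancel_right]
  have hw'L : w' ∈ L := L.sub_mem hwL (hΓL _ (hsumΓ _))
  have hmem : w' ∈ W := by
    refine hWl l hl g' ?_ w' hw' ?_
    · intro i
      exact natDegree_modByMonic_le _ hl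
    · have hm : b * w' ∈ (L ⊔ (RatFunc Fq)⟮b⟯ : IntermediateField (RatFunc Fq) K) :=
        mul_mem ((le_sup_right : (RatFunc Fq)⟮b⟯ ≤ L ⊔ (RatFunc Fq)⟮b⟯)
          (IntermediateField.mem_adjoin_simple_self _ b))
          ((le_sup_left : L ≤ L ⊔ (RatFunc Fq)⟮b⟯) hw'L)
      have := minpoly.natDegree_le (A := RatFunc Fq) (⟨_, hm⟩ :
        (L ⊔ (RatFunc Fq)⟮b⟯ : IntermediateField (RatFunc Fq) K))
      rwa [IntermediateField.minpoly_eq] at this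
  have hFw : φ (F w') w' ∈ Γ := hF w' ⟨l, hi.ne_zero, by rw [hw']; exact hsumΓ _⟩
  obtain ⟨N', hN'⟩ : F w' ∣ N := Finset.dvd_prod_of_mem _ (hW.mem_toFinset.2 hmem)
  have hNw : φ N w' ∈ Γ := by
    rw [hN', mul_comm, DK.phi_mul]; exact hΓA _ _ hFw
  obtain ⟨c, hc⟩ := hgen _ hNw
  have h0 := hind (fun i => l * c i - N * g' i) (by
    have e1 : φ l (φ N w') = φ N (φ l w') := DK.phi_comm _ _ _ _
    rw [hc, hw', map_sum, map_sum] at e1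
    rw [← sub_eq_zero, ← Finset.sum_sub_distrib] at e1
    rw [← e1]
    refine Finset.sum_congr rfl fun i _ => ?_
    rw [map_sub, ← DK.phi_mul, ← DK.phi_mul]; rfl) i
  have hdvd : l ∣ N * g' i := ⟨c i, by linear_combination -h0⟩
  rcases hi.prime.dvd_or_dvd hdvd with h1 | h1
  · exact absurd (natDegree_le_of_dvd h1 hN0) (by omega)
  · exact (dvd_iff_dvd_of_dvd_sub (c := g i) (b := g' i) (a := l) (by
      have := modByMonic_add_div (g i) l
      exact ⟨-(g i /ₘ l), by simp only [g']; linear_combination this⟩)).1 h1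

end PartA

section Gal

variable {Fq : Type} [Field Fq] [Fintype Fq] {K L : Type} [Field K] [Field L]
  [Algebra (Polynomial Fq) K] [Algebra (Polynomial Fq) L] [Algebra L K]
  [IsScalarTower (Polynomial Fq) L K]
  {φ : Polynomial Fq →+* AddMonoid.End K} {a : L}

lemma DK.exists_poly (h : DK.Car φ (algebraMap L K a)) (f : Polynomial Fq) :
    ∃ p : Polynomial L, (∀ x : K, aeval x p = φ f x) ∧
      derivative p = C (algebraMap (Polynomial Fq) L f) := by
  have hmul : ∀ c : Fq, ∀ g : Polynomial Fq, (∃ p : Polynomial L, (∀ x : K, aeval x p = φ g x) ∧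
      derivative p = C (algebraMap (Polynomial Fq) L g)) →
      ∃ p : Polynomial L, (∀ x : K, aeval x p = φ (C c * g) x) ∧
      derivative p = C (algebraMap (Polynomial Fq) L (C c * g)) := by
    rintro c g ⟨p, hp, hd⟩
    refine ⟨C (algebraMap (Polynomial Fq) L (C c)) * p, fun x => ?_, ?_⟩
    · rw [map_mul, aeval_C, hp, DK.phi_mul, h.2, ← IsScalarTower.algebraMap_apply]
    · rw [derivative_C_mul, hd, map_mul, C_mul]
  have hX : ∀ n, ∃ p : Polynomial L, (∀ x : K, aeval x p = φ (X ^ n) x) ∧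
      derivative p = C (algebraMap (Polynomial Fq) L (X ^ n)) := by
    intro n
    induction n with
    | zero => exact ⟨X, fun x => by simp, by simp⟩
    | succ n ih =>
      obtain ⟨p, hp, hd⟩ := ih
      refine ⟨C (algebraMap (Polynomial Fq) L X) * p + C a * p ^ Fintype.card Fq,
        fun x => ?_, ?_⟩
      · rw [map_add, map_mul, map_mul, aeval_C, aeval_C, map_pow, hp, pow_succ', DK.phi_mul, h.1,
          ← IsScalarTower.algebraMap_apply]
      · rw [derivative_add, derivative_C_mul, derivative_C_mul, derivative_pow, hd,
          DK.card_zeroK Fq, pow_succ' X n, map_mul (algebraMap _ _), C_mul]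
        simp
  induction f using Polynomial.induction_on' with
  | add f g hf hg =>
    obtain ⟨p, hp, hd⟩ := hf
    obtain ⟨p', hp', hd'⟩ := hg
    refine ⟨p + p', fun x => ?_, ?_⟩
    · rw [map_add, hp, hp', DK.phi_add]
    · rw [derivative_add, hd, hd', map_add, C_add]
  | monomial n c =>
    rw [← C_mul_X_pow_eq_monomial]
    exact hmul c _ (hX n)

lemma DK.sigma_comm (h : DK.Car φ (algebraMap L K a)) (σ : K ≃ₐ[L] K) (f : Polynomial Fq) (x : K) :
    σ (φ f x) = φ f (σ x) := by
  obtain ⟨p, hp, -⟩ := DK.exists_poly h f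
  rw [← hp, ← hp, aeval_algHom_apply]

lemma DK.sep (h : DK.Car φ (algebraMap L K a))
    (hinj : Function.Injective (algebraMap (Polynomial Fq) L))
    {l : Polynomial Fq} (hl : l ≠ 0) (x : K) (y : L) (hx : φ l x = algebraMap L K y) :
    IsSeparable L x := by
  obtain ⟨p, hp, hd⟩ := DK.exists_poly h l
  have h0 : aeval x (p - C y) = 0 := by rw [map_sub, hp, hx, aeval_C, sub_self]
  refine Separable.of_dvd ?_ (minpoly.dvd L x h0)
  rw [separable_def, derivative_sub, hd, derivative_C, sub_zero]
  apply IsCoprime.symm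
  have hne : algebraMap (Polynomial Fq) L l ≠ 0 := (map_ne_zero_iff _ hinj).2 hl
  exact ⟨C (algebraMap (Polynomial Fq) L l)⁻¹, 0, by
    rw [zero_mul, add_zero, ← C_mul, inv_mul_cancel₀ hne, C_1]⟩

lemma DK.fixed [Normal L K] (x : K) (hx : IsSeparable L x) (hf : ∀ σ : K ≃ₐ[L] K, σ x = x) :
    ∃ y : L, algebraMap L K y = x := by
  by_contra hn
  have : x ∉ (⊥ : Subalgebra L K) := fun hmem => hn (Algebra.mem_bot.1 hmem)
  rw [notMem_iff_exists_ne_and_isConjRoot hx (Normal.splits inferInstance x)] at this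
  obtain ⟨y, hne, hy⟩ := this
  obtain ⟨σ, hσ⟩ := hy.symm.exists_algEquiv
  exact hne (by rw [← hσ, hf])

lemma DK.subring_top {F : Type} [Field F] [Finite F] (R : Subring F)
    (hR : Nat.card F < Nat.card R ^ 2) : R = ⊤ := by
  classical
  let _ : Field R := (Finite.isField_of_domain R).toField
  have h1 : Nat.card F = Nat.card R ^ Module.finrank R F := Module.natCard_eq_pow_finrank
  have hR1 : 1 < Nat.card R := Finite.one_lt_card
  have h2 : Module.finrank R F < 2 := by
    rw [h1] at hR
    exact (Nat.pow_lt_pow_iff_right hR1).1 hR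
  have h3 : 0 < Module.finrank R F := Module.finrank_pos
  have h4 : Module.finrank R F = 1 := by omega
  rw [h4, pow_one] at h1
  have : (R : Set F) = Set.univ := by
    rw [Set.eq_univ_iff_ncard]
    rw [h1]; rfl
  exact SetLike.coe_injective this

end Gal

section Tors

variable {Fq : Type} [Field Fq] [Fintype Fq] {K : Type} [Field K] [Algebra (Polynomial Fq) K]
  {φ : Polynomial Fq →+* AddMonoid.End K} {a : K}

lemma DK.exists_u0 [IsAlgClosed K] (hinj : Function.Injective (algebraMap (Polynomial Fq) K))
    (h : DK.Car φ a) {b : K} (hb : b ^ (Fintype.card Fq - 1) = a) (hb0 : b ≠ 0)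
    (l : Polynomial Fq) (hl : l.Monic) (hi : Irreducible l) :
    ∃ u : K, aeval (b * u) (DK.QQ l) = 0 ∧ φ l u = 0 ∧ u ≠ 0 := by
  have hd : ((DK.QQ l).map (algebraMap (Polynomial Fq) K)).degree ≠ 0 := by
    rw [(DK.QQ_monic l hl).degree_map, degree_eq_natDegree (DK.QQ_monic l hl).ne_zero,
      DK.QQ_natDegree l hl]
    have := DK.one_lt_qpow (Fq := Fq) _ hi.natDegree_pos.ne'
    have h2 : Fintype.card Fq ^ l.natDegree - 1 ≠ 0 := by omega
    exact_mod_cast h2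
  obtain ⟨x, hx⟩ := IsAlgClosed.exists_root _ hd
  have hx' : aeval x (DK.QQ l) = 0 := by
    rw [IsRoot.def, eval_map_algebraMap] at hx; exact hx
  have e : b * (b⁻¹ * x) = x := by field_simp
  refine ⟨b⁻¹ * x, by rw [e, hx'], ?_, ?_⟩
  · have := DK.phi_QQ h hb l (b⁻¹ * x)
    rw [e, hx', mul_zero] at this
    exact (mul_eq_zero.1 this).resolve_left hb0
  · intro h0
    have : x = 0 := by rw [← e, h0, mul_zero]
    rw [this, ← coeff_zero_eq_aeval_zero', DK.QQ_coeff_zero] at hx'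
    exact hi.ne_zero ((map_eq_zero_iff _ hinj).1 hx')

lemma DK.ann (l : Polynomial Fq) (hi : Irreducible l) (u : K) (hu : φ l u = 0) (hu0 : u ≠ 0)
    (f : Polynomial Fq) : φ f u = 0 ↔ l ∣ f := by
  constructor
  · intro hf
    by_contra hn
    obtain ⟨x, y, hxy⟩ := (hi.coprime_iff_not_dvd).2 hn
    apply hu0
    have : φ 1 u = 0 := by
      rw [← hxy, DK.phi_add, DK.phi_mul, DK.phi_mul, hu, hf]; simp
    simpa using this
  · rintro ⟨g, rfl⟩
    rw [mul_comm, DK.phi_mul, hu, map_zero]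

lemma DK.cyc_card (l : Polynomial Fq) (hl : l.Monic) :
    Nat.card (AdjoinRoot l) = Fintype.card Fq ^ l.natDegree ∧ Finite (AdjoinRoot l) := by
  have : Module.Finite Fq (AdjoinRoot l) := hl.finite_adjoinRoot
  refine ⟨?_, Module.finite_of_finite Fq⟩
  rw [Module.natCard_eq_pow_finrank (K := Fq), Nat.card_eq_fintype_card]
  congr 1
  exact finrank_quotient_span_eq_natDegree

lemma DK.cyc (h : DK.Car φ a) {b : K} (hb : b ^ (Fintype.card Fq - 1) = a) (hb0 : b ≠ 0)
    (l : Polynomial Fq) (hl : l.Monic) (hi : Irreducible l)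
    (u : K) (hu : φ l u = 0) (hu0 : u ≠ 0) (x : K) (hx : φ l x = 0) :
    ∃ f : Polynomial Fq, φ f u = x := by
  classical
  obtain ⟨hcard, hfin⟩ := DK.cyc_card l hl
  let p : Polynomial K := X * (DK.QQ l).map (algebraMap (Polynomial Fq) K)
  have hm : p.Monic := monic_X.mul ((DK.QQ_monic l hl).map _)
  have hp : p.natDegree = Fintype.card Fq ^ l.natDegree := by
    have := DK.one_lt_qpow (Fq := Fq) _ hi.natDegree_pos.ne'
    rw [natDegree_X_mul ((DK.QQ_monic l hl).map _).ne_zero, (DK.QQ_monic l hl).natDegree_map,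
      DK.QQ_natDegree l hl]
    omega
  let T : Finset K := p.roots.toFinset.image (fun y => b⁻¹ * y)
  have hT : T.card ≤ Fintype.card Fq ^ l.natDegree :=
    Finset.card_image_le.trans ((Multiset.toFinset_card_le _).trans (hp ▸ p.card_roots'))
  have hTmem : ∀ y, φ l y = 0 → y ∈ T := by
    intro y hy
    refine Finset.mem_image.2 ⟨b * y, ?_, by field_simp⟩
    rw [Multiset.mem_toFinset, mem_roots hm.ne_zero, IsRoot.def, eval_mul, eval_X,
      eval_map_algebraMap, ← DK.phi_QQ h hb, hy, mul_zero]
  let s : AdjoinRoot l → Polynomial Fq := Function.surjInv AdjoinRoot.mk_surjective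
  have hs : ∀ y, AdjoinRoot.mk l (s y) = y := Function.surjInv_eq _
  let ψ : AdjoinRoot l → K := fun y => φ (s y) u
  have hψ : Function.Injective ψ := by
    intro y z hyz
    have : φ (s y - s z) u = 0 := by
      rw [map_sub]; exact sub_eq_zero.2 hyz
    rw [DK.ann l hi u hu hu0] at this
    rw [← hs y, ← hs z]
    exact AdjoinRoot.mk_eq_mk.2 this
  have _ : Fintype (AdjoinRoot l) := Fintype.ofFinite _
  have himg : Finset.univ.image ψ = T := by
    apply Finset.eq_of_subset_of_card_le
    · intro y hy
      obtain ⟨z, -, rfl⟩ := Finset.mem_image.1 hy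
      apply hTmem
      show φ l (φ (s z) u) = 0
      rw [DK.phi_comm, hu, map_zero]
    · rw [Finset.card_image_of_injective _ hψ, Finset.card_univ, ← Nat.card_eq_fintype_card, hcard]
      exact hT
  have := hTmem x hx
  rw [← himg] at this
  obtain ⟨z, -, hz⟩ := Finset.mem_image.1 this
  exact ⟨s z, hz⟩

end Tors

section Core

variable {Fq : Type} [Field Fq] [Fintype Fq] {K L : Type} [Field K] [Field L]
  [Algebra (Polynomial Fq) K] [Algebra (Polynomial Fq) L] [Algebra L K]
  [IsScalarTower (Polynomial Fq) L K]
  {φ : Polynomial Fq →+* AddMonoid.End K} {a : L}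

/-- The additive group of Kummer cocycle values, in coordinates. -/
def DK.Wg (φ : Polynomial Fq →+* AddMonoid.End K) (L : Type) [Field L] [Algebra L K]
    (hcomm : ∀ (σ : K ≃ₐ[L] K) (f : Polynomial Fq) (x : K), σ (φ f x) = φ f (σ x))
    (l : Polynomial Fq) (u : K) (hu : φ l u = 0)
    {r : ℕ} (α : Fin r → K) : AddSubgroup (Fin r → AdjoinRoot l) where
  carrier := {c | ∃ g : Fin r → Polynomial Fq, (∀ i, AdjoinRoot.mk l (g i) = c i) ∧
    ∃ σ : K ≃ₐ[L] K, σ u = u ∧ ∀ i, σ (α i) = α i + φ (g i) u}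
  zero_mem' := ⟨0, fun i => by simp, AlgEquiv.refl, rfl, fun i => by simp⟩
  add_mem' := by
    rintro c c' ⟨g, hg, σ, hσ, h1⟩ ⟨g', hg', σ', hσ', h1'⟩
    refine ⟨g + g', fun i => by simp [hg, hg'], σ * σ', ?_, fun i => ?_⟩
    · rw [AlgEquiv.mul_apply, hσ', hσ]
    · rw [AlgEquiv.mul_apply, h1', map_add, h1, hcomm, hσ, Pi.add_apply, DK.phi_add, add_assoc]
  neg_mem' := by
    rintro c ⟨g, hg, σ, hσ, h1⟩
    refine ⟨-g, fun i => by simp [hg], σ.symm, ?_, fun i => ?_⟩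
    · rw [AlgEquiv.symm_apply_eq, hσ]
    · rw [AlgEquiv.symm_apply_eq, map_add, h1, hcomm, hσ, Pi.neg_apply, add_assoc, ← DK.phi_add,
        add_neg_cancel, map_zero]
      exact (add_zero _).symm

/-- The multiplier ring of an additive subgroup. -/
def DK.mult {F : Type} [Field F] {ι : Type} (W : AddSubgroup (ι → F)) : Subring F where
  carrier := {x | ∀ c ∈ W, x • c ∈ W}
  mul_mem' := by
    intro x y hx hy c hc
    rw [mul_smul]; exact hx _ (hy _ hc)
  one_mem' := by
    intro c hc
    rwa [one_smul]
  add_mem' := by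
    intro x y hx hy c hc
    rw [add_smul]; exact W.add_mem (hx _ hc) (hy _ hc)
  zero_mem' := by
    intro c hc
    rw [zero_smul]; exact W.zero_mem
  neg_mem' := by
    intro x hx c hc
    rw [neg_smul]; exact W.neg_mem (hx _ hc)

lemma DK.phi_mem (h : DK.Car φ (algebraMap L K a)) (f : Polynomial Fq) (x : L) :
    ∃ y : L, φ f (algebraMap L K x) = algebraMap L K y := by
  obtain ⟨p, hp, -⟩ := DK.exists_poly h f
  exact ⟨aeval x p, by rw [← hp, aeval_algebraMap_apply]⟩

lemma DK.core [Normal L K] (h : DK.Car φ (algebraMap L K a))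
    (hinj : Function.Injective (algebraMap (Polynomial Fq) L))
    (l : Polynomial Fq) (hl : l.Monic) (hi : Irreducible l)
    (u : K) (hu : φ l u = 0) (hu0 : u ≠ 0) (hcyc : ∀ x, φ l x = 0 → ∃ f, φ f u = x)
    (hdeg : Fintype.card Fq ^ l.natDegree < (minpoly L u).natDegree ^ 2)
    {r : ℕ} (α : Fin r → K) (aL : Fin r → L) (hα : ∀ i, φ l (α i) = algebraMap L K (aL i))
    (hA : ∀ g : Fin r → Polynomial Fq,
      (∃ w : L, φ l (algebraMap L K w) = ∑ i, φ (g i) (algebraMap L K (aL i))) → ∀ i, l ∣ g i)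
    (v : Fin r → K) (hv : ∀ i, φ l (v i) = 0) :
    ∃ σ : K ≃ₐ[L] K, (∀ x, φ l x = 0 → σ x = x) ∧ ∀ i, σ (α i) - α i = v i := by
  classical
  have hfact : Fact (Irreducible l) := ⟨hi⟩
  obtain ⟨hcard, hfin⟩ := DK.cyc_card l hl
  have hcomm := DK.sigma_comm h
  have hann := DK.ann (φ := φ) l hi u hu hu0
  have hmk : ∀ f g : Polynomial Fq, φ f u = φ g u ↔ AdjoinRoot.mk l f = AdjoinRoot.mk l g := by
    intro f g
    rw [AdjoinRoot.mk_eq_mk, ← hann, map_sub]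
    exact sub_eq_zero.symm
  have hH : ∀ σ : K ≃ₐ[L] K, σ u = u → ∀ x, φ l x = 0 → σ x = x := by
    intro σ hσ x hx
    obtain ⟨f, rfl⟩ := hcyc x hx
    rw [hcomm, hσ]
  have hδ : ∀ (τ : K ≃ₐ[L] K) i, φ l (τ (α i) - α i) = 0 := by
    intro τ i
    rw [map_sub, ← hcomm, hα, AlgEquiv.commutes, sub_self]
  have hτu : ∀ τ : K ≃ₐ[L] K, ∃ f, φ f u = τ u := by
    intro τ
    exact hcyc _ (by rw [← hcomm, hu, map_zero])
  have hsepu : IsSeparable L u := DK.sep h hinj hi.ne_zero u 0 (by rw [hu, map_zero])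
  set W := DK.Wg φ L hcomm l u hu α with hWdef
  have hWmem : ∀ c, c ∈ W ↔ ∃ g : Fin r → Polynomial Fq, (∀ i, AdjoinRoot.mk l (g i) = c i) ∧
    ∃ σ : K ≃ₐ[L] K, σ u = u ∧ ∀ i, σ (α i) = α i + φ (g i) u := fun c => Iff.rfl
  have hmult : ∀ (τ : K ≃ₐ[L] K) f, τ u = φ f u → AdjoinRoot.mk l f ∈ DK.mult W := by
    intro τ f hτ c hc
    obtain ⟨g, hg, σ, hσ, h1⟩ := (hWmem c).1 hc
    refine (hWmem _).2 ⟨fun i => f * g i, fun i => by simp [hg], τ * σ * τ.symm, ?_, fun i => ?_⟩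
    · rw [AlgEquiv.mul_apply, AlgEquiv.mul_apply, hH σ hσ, AlgEquiv.apply_symm_apply]
      rw [← hcomm, hu, map_zero]
    · have e1 : σ (τ.symm (α i)) = τ.symm (α i) + φ (g i) u := by
        have := hH σ hσ _ (hδ τ.symm i)
        rw [map_sub, h1] at this
        linear_combination this
      rw [AlgEquiv.mul_apply, AlgEquiv.mul_apply, e1, map_add, AlgEquiv.apply_symm_apply, hcomm,
        hτ, ← DK.phi_mul, mul_comm]
  have htop : DK.mult W = ⊤ := by
    apply DK.subring_top
    rw [hcard]
    refine hdeg.trans_le (Nat.pow_le_pow_left ?_ 2)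
    rw [← card_rootSet_eq_natDegree (K := K) hsepu (Normal.splits inferInstance u),
      ← Nat.card_eq_fintype_card]
    have hx : ∀ y : (minpoly L u).rootSet K, ∃ f : Polynomial Fq, φ f u = y ∧
        AdjoinRoot.mk l f ∈ DK.mult W := by
      rintro ⟨y, hy⟩
      have hc : IsConjRoot L u y := by
        rw [isConjRoot_iff_mem_minpoly_rootSet (hsepu.isIntegral)]
        exact hy
      obtain ⟨τ, hτ⟩ := hc.symm.exists_algEquiv
      obtain ⟨f, hf⟩ := hτu τ
      exact ⟨f, by rw [hf, hτ], hmult τ f hf.symm⟩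
    choose f hf hfm using hx
    refine Nat.card_le_card_of_injective (fun y => (⟨AdjoinRoot.mk l (f y), hfm y⟩ : DK.mult W)) ?_
    intro y z hyz
    have := (hmk _ _).2 (Subtype.ext_iff.1 hyz)
    rw [hf, hf] at this
    exact Subtype.ext this
  let WS : Submodule (AdjoinRoot l) (Fin r → AdjoinRoot l) :=
    { W with
      smul_mem' := by
        intro x c hc
        have : x ∈ DK.mult W := by rw [htop]; trivial
        exact this c hc }
  have hWS : ∀ c, c ∈ WS ↔ c ∈ W := fun c => Iff.rfl
  by_cases hWtop : WS = ⊤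
  · choose g hg using fun i => hcyc (v i) (hv i)
    have : (fun i => AdjoinRoot.mk l (g i)) ∈ WS := by rw [hWtop]; trivial
    obtain ⟨g', hg', σ, hσ, h1⟩ := (hWmem _).1 this
    refine ⟨σ, hH σ hσ, fun i => ?_⟩
    rw [h1, (hmk _ _).2 (hg' i), hg]
    ring
  exfalso
  obtain ⟨e, he, hWe⟩ := Submodule.exists_le_ker_of_lt_top WS (lt_top_iff_ne_top.2 hWtop)
  choose cf hcf using fun i => AdjoinRoot.mk_surjective (e (Pi.single i 1))
  have hev : ∀ c, e c = ∑ i, c i * AdjoinRoot.mk l (cf i) := by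
    intro c
    conv_lhs => rw [pi_eq_sum_univ' c]
    rw [map_sum]
    refine Finset.sum_congr rfl fun i _ => ?_
    rw [map_smul, hcf, smul_eq_mul]
  have hncf : ¬ ∀ i, l ∣ cf i := by
    intro hall
    apply he
    refine LinearMap.ext fun c => ?_
    rw [hev]
    exact Finset.sum_eq_zero fun i _ => by rw [AdjoinRoot.mk_eq_zero.2 (hall i), mul_zero]
  apply hncf
  set β := ∑ i, φ (cf i) (α i) with hβ
  have hβH : ∀ σ : K ≃ₐ[L] K, σ u = u → σ β = β := by
    intro σ hσ
    choose g hg using fun i => hcyc _ (hδ σ i)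
    have hm : (fun i => AdjoinRoot.mk l (g i)) ∈ WS := by
      refine (hWmem _).2 ⟨g, fun i => rfl, σ, hσ, fun i => ?_⟩
      rw [hg]; ring
    have h0 := LinearMap.mem_ker.1 (hWe hm)
    rw [hev] at h0
    have h2 : l ∣ ∑ i, cf i * g i := by
      rw [← AdjoinRoot.mk_eq_zero, map_sum, ← h0]
      exact Finset.sum_congr rfl fun i _ => by rw [map_mul, mul_comm]
    rw [← hann, DK.phi_sum] at h2
    rw [← sub_eq_zero, hβ, map_sum, ← Finset.sum_sub_distrib, ← h2]
    refine Finset.sum_congr rfl fun i _ => ?_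
    rw [hcomm, ← map_sub, DK.phi_mul, hg]
  obtain ⟨τ0, hτ0⟩ : ∃ τ : K ≃ₐ[L] K, τ u ≠ u := by
    by_contra hno
    push Not at hno
    obtain ⟨y, hy⟩ := DK.fixed u hsepu hno
    have h1 : (minpoly L u).natDegree = 1 := by
      rw [← hy, minpoly.eq_X_sub_C, natDegree_X_sub_C]
    rw [h1, one_pow] at hdeg
    exact absurd hdeg (by have := DK.one_lt_qpow (Fq := Fq) _ hi.natDegree_pos.ne'; omega)
  have hε : ∀ τ : K ≃ₐ[L] K, ∃ e, φ e u = τ β - β := by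
    intro τ
    apply hcyc
    rw [hβ, map_sum, ← Finset.sum_sub_distrib, map_sum]
    refine Finset.sum_eq_zero fun i _ => ?_
    rw [hcomm, ← map_sub, DK.phi_comm, hδ, map_zero]
  obtain ⟨f0, hf0⟩ := hτu τ0
  obtain ⟨e0, he0⟩ := hε τ0
  have hnd : ¬ l ∣ f0 - 1 := by
    rw [← AdjoinRoot.mk_eq_mk, ← hmk, hf0]
    simpa using hτ0
  obtain ⟨x, k, hk⟩ := (hi.coprime_iff_not_dvd).2 hnd
  have hk' : AdjoinRoot.mk l k * (AdjoinRoot.mk l f0 - 1) = 1 := by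
    have := congrArg (AdjoinRoot.mk l) hk
    rw [map_add, map_mul, map_mul, AdjoinRoot.mk_self, mul_zero, zero_add, map_sub, map_one] at this
    exact this
  have hfix : ∀ τ : K ≃ₐ[L] K, τ (β - φ (k * e0) u) = β - φ (k * e0) u := by
    intro τ
    obtain ⟨f, hf⟩ := hτu τ
    obtain ⟨e1, he1⟩ := hε τ
    have hρ : ((τ0 * τ).symm * (τ * τ0)) u = u := by
      rw [AlgEquiv.mul_apply, AlgEquiv.symm_apply_eq, AlgEquiv.mul_apply, AlgEquiv.mul_apply,
        ← hf, ← hf0, hcomm, hcomm, ← hf, ← hf0, DK.phi_comm]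
    have hρβ := hβH _ hρ
    rw [AlgEquiv.mul_apply, AlgEquiv.symm_apply_eq, AlgEquiv.mul_apply, AlgEquiv.mul_apply] at hρβ
    have t0 : τ0 β = β + φ e0 u := by rw [he0]; ring
    have t1 : τ β = β + φ e1 u := by rw [he1]; ring
    rw [t0, t1, map_add, map_add, t0, t1, hcomm, hcomm, ← hf, ← hf0, ← DK.phi_mul, ← DK.phi_mul,
      add_assoc, add_assoc, add_right_inj, ← DK.phi_add, ← DK.phi_add, hmk] at hρβ
    rw [map_sub, t1, hcomm, ← hf, ← DK.phi_mul]
    have key : φ (e1 + k * e0) u = φ (k * e0 * f) u := by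
      rw [hmk]
      simp only [map_add, map_mul] at hρβ ⊢
      linear_combination (- AdjoinRoot.mk l e1) * hk' + (-AdjoinRoot.mk l k) * hρβ
    rw [DK.phi_add] at key
    linear_combination key
  choose y hy using fun i => DK.phi_mem h (cf i) (aL i)
  have hφβ : φ l (β - φ (k * e0) u) = ∑ i, φ (cf i) (algebraMap L K (aL i)) := by
    rw [map_sub, DK.phi_comm φ l, hu, map_zero, sub_zero, hβ, map_sum]
    exact Finset.sum_congr rfl fun i _ => by rw [DK.phi_comm, hα]
  have hs : IsSeparable L (β - φ (k * e0) u) :=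
    DK.sep h hinj hi.ne_zero _ (∑ i, y i) (by
      rw [hφβ, map_sum]; exact Finset.sum_congr rfl fun i _ => hy i)
  obtain ⟨w, hw⟩ := DK.fixed _ hs hfix
  exact hA cf ⟨w, by rw [hw, hφβ]⟩

end Core

section Final

lemma DK.arith (N n m : ℕ) (h1 : N - 1 ≤ m * n) (h2 : m ^ 2 + 2 ≤ N) : N < n ^ 2 := by
  by_contra hc
  push Not at hc
  obtain ⟨t, rfl⟩ := Nat.exists_eq_add_of_le h2
  have h3 : m ^ 2 + 1 + t ≤ m * n := by omega
  have h4 : (m ^ 2 + 1 + t) ^ 2 ≤ m ^ 2 * n ^ 2 := by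
    rw [← mul_pow]; exact Nat.pow_le_pow_left h3 2
  have h5 : m ^ 2 * n ^ 2 ≤ m ^ 2 * (m ^ 2 + 2 + t) := Nat.mul_le_mul_left _ hc
  nlinarith

variable {Fq : Type} [Field Fq] [Fintype Fq] {K L : Type} [Field K] [Field L]
  [Algebra (Polynomial Fq) K] [Algebra (Polynomial Fq) L] [Algebra L K]
  [IsScalarTower (Polynomial Fq) L K]

lemma DK.degbound [Algebra (RatFunc Fq) K] [IsScalarTower (Polynomial Fq) (RatFunc Fq) K]
    [Algebra (RatFunc Fq) L] [IsScalarTower (RatFunc Fq) L K] [FiniteDimensional (RatFunc Fq) L]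
    [Algebra.IsAlgebraic L K]
    (l : Polynomial Fq) (hl : l.Monic) (hi : Irreducible l)
    (b u : K) (hu : aeval (b * u) (DK.QQ l) = 0) :
    Fintype.card Fq ^ l.natDegree - 1 ≤
      (Module.finrank (RatFunc Fq) L * (minpoly L b).natDegree) * (minpoly L u).natDegree := by
  have hbi : IsIntegral L b := Algebra.IsIntegral.isIntegral b
  have hui : IsIntegral L u := Algebra.IsIntegral.isIntegral u
  have f1 := IntermediateField.adjoin.finiteDimensional hbi
  have f2 := IntermediateField.adjoin.finiteDimensional hui
  let E : IntermediateField L K := L⟮b⟯ ⊔ L⟮u⟯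
  have hmem : b * u ∈ E := mul_mem
    ((le_sup_left : L⟮b⟯ ≤ E) (IntermediateField.mem_adjoin_simple_self L b))
    ((le_sup_right : L⟮u⟯ ≤ E) (IntermediateField.mem_adjoin_simple_self L u))
  have hE : FiniteDimensional L E := IntermediateField.finiteDimensional_sup _ _
  have hkE : FiniteDimensional (RatFunc Fq) E := FiniteDimensional.trans (RatFunc Fq) L E
  have hirr : Irreducible ((DK.QQ l).map (algebraMap (Polynomial Fq) (RatFunc Fq))) :=
    ((DK.QQ_monic l hl).irreducible_iff_irreducible_map_fraction_map).1 (DK.QQ_irreducible l hl hi)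
  have hmin : minpoly (RatFunc Fq) (b * u) =
      (DK.QQ l).map (algebraMap (Polynomial Fq) (RatFunc Fq)) := by
    refine (minpoly.eq_of_irreducible_of_monic hirr ?_ ((DK.QQ_monic l hl).map _)).symm
    rw [aeval_map_algebraMap, hu]
  have hdeg : (minpoly (RatFunc Fq) (b * u)).natDegree = Fintype.card Fq ^ l.natDegree - 1 := by
    rw [hmin, (DK.QQ_monic l hl).natDegree_map, DK.QQ_natDegree l hl]
  rw [← hdeg]
  have hst : IsScalarTower (RatFunc Fq) E K := IsScalarTower.of_algebraMap_eq fun x => by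
    rw [IsScalarTower.algebraMap_apply (RatFunc Fq) L E, IsScalarTower.algebraMap_apply (RatFunc Fq) L K]
    rfl
  have e1 : minpoly (RatFunc Fq) (b * u) = minpoly (RatFunc Fq) (⟨b * u, hmem⟩ : E) :=
    minpoly.algebraMap_eq (B := E) (B' := K) (algebraMap E K).injective ⟨b * u, hmem⟩
  rw [e1]
  refine (minpoly.natDegree_le _).trans ?_
  rw [← Module.finrank_mul_finrank (RatFunc Fq) L E, mul_assoc]
  refine Nat.mul_le_mul_left _ ((IntermediateField.finrank_sup_le _ _).trans ?_)
  rw [IntermediateField.adjoin.finrank hbi, IntermediateField.adjoin.finrank hui]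

variable {φ : Polynomial Fq →+* AddMonoid.End K} {a : L}

lemma DK.partB [Normal L K] [IsAlgClosed K] (h : DK.Car φ (algebraMap L K a))
    (hinj : Function.Injective (algebraMap (Polynomial Fq) L))
    (Γ : AddSubgroup K) (hΓL : ∀ x ∈ Γ, ∃ y : L, algebraMap L K y = x)
    (r : ℕ) (a : Fin r → K)
    (haΓ : ∀ i, a i ∈ Γ)
    (hgen : ∀ x ∈ Γ, ∃ g : Fin r → Polynomial Fq, x = ∑ i, φ (g i) (a i))
    (l : Polynomial Fq) (hi : Irreducible l)
    (hsurj : ∀ α : Fin r → K, (∀ i, φ l (α i) = a i) → ∀ v : Fin r → K, (∀ i, φ l (v i) = 0) →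
      ∃ σ : K ≃ₐ[L] K, (∀ x, φ l x = 0 → σ x = x) ∧ ∀ i, σ (α i) - α i = v i)
    (E : IntermediateField L K) (hE : E = IntermediateField.adjoin L {x | φ l x ∈ Γ}) :
    ∃ α : Fin r → ↥E,
      (∀ i, φ l (α i : K) = a i) ∧
      (∀ σ τ : ↥E ≃ₐ[L] ↥E,
        (∀ x : ↥E, φ l (x : K) = 0 → σ x = x) →
        (∀ x : ↥E, φ l (x : K) = 0 → τ x = x) →
        ∀ i, ((σ * τ) (α i) : K) - (α i : K)
          = ((σ (α i) : K) - (α i : K)) + ((τ (α i) : K) - (α i : K))) ∧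
      (∀ (f : Polynomial Fq) (σ : ↥E ≃ₐ[L] ↥E),
        (∀ x : ↥E, φ l (x : K) = 0 → σ x = x) →
        ∃ τ : ↥E ≃ₐ[L] ↥E,
          (∀ x : ↥E, φ l (x : K) = 0 → τ x = x) ∧
          ∀ i, (τ (α i) : K) - (α i : K) = φ f ((σ (α i) : K) - (α i : K))) ∧
      Set.BijOn
        (fun σ : ↥E ≃ₐ[L] ↥E => fun i => (σ (α i) : K) - (α i : K))
        {σ : ↥E ≃ₐ[L] ↥E | ∀ x : ↥E, φ l (x : K) = 0 → σ x = x}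
        {v : Fin r → K | ∀ i, φ l (v i) = 0} := by
  have hcomm := DK.sigma_comm h
  have hgenE : ∀ x, φ l x ∈ Γ → x ∈ E := by
    intro x hx
    rw [hE]; exact IntermediateField.subset_adjoin L _ hx
  -- E is normal
  have hN : Normal L E := by
    rw [IntermediateField.normal_iff_forall_map_le']
    intro σ
    rw [hE, IntermediateField.adjoin_map, IntermediateField.adjoin_le_iff]
    rintro _ ⟨x, hx, rfl⟩
    apply IntermediateField.subset_adjoin L
    obtain ⟨y, hy⟩ := hΓL _ hx
    have : φ l (σ x) = φ l x := by
      rw [← hcomm, ← hy, AlgEquiv.commutes]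
    show φ l (σ x) ∈ Γ
    rw [this]; exact hx
  have hlift : ∀ (σ : ↥E ≃ₐ[L] ↥E) (x : ↥E), ((σ x : ↥E) : K) = (σ.liftNormal K) (x : K) := by
    intro σ x
    exact (AlgEquiv.liftNormal_commutes σ K x).symm
  have hcommE : ∀ (σ : ↥E ≃ₐ[L] ↥E) (x y : ↥E) (f : Polynomial Fq), φ f (x : K) = y →
      φ f (σ x : K) = (σ y : K) := by
    intro σ x y f hxy
    rw [hlift, hlift, ← hcomm, hxy]
  -- the division points
  obtain ⟨p, hp, hd⟩ := DK.exists_poly h l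
  have hex : ∀ i, ∃ x : K, φ l x = a i := by
    intro i
    obtain ⟨y, hy⟩ := hΓL _ (haΓ i)
    have hdeg : (p - C y).degree ≠ 0 := by
      intro h0
      have h1 : derivative (p - C y) = C (algebraMap (Polynomial Fq) L l) := by
        rw [derivative_sub, hd, derivative_C, sub_zero]
      rw [eq_C_of_degree_eq_zero h0, derivative_C] at h1
      exact (map_ne_zero_iff _ hinj).2 hi.ne_zero (C_eq_zero.1 h1.symm)
    obtain ⟨x, hx⟩ := IsAlgClosed.exists_aeval_eq_zero K (p - C y) hdeg
    exact ⟨x, by rw [map_sub, hp, aeval_C, hy, sub_eq_zero] at hx; exact hx⟩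
  choose α0 hα0 using hex
  have hα0E : ∀ i, α0 i ∈ E := fun i => hgenE _ (by rw [hα0]; exact haΓ i)
  have hVE : ∀ x, φ l x = 0 → x ∈ E := fun x hx => hgenE _ (by rw [hx]; exact Γ.zero_mem)
  have hmaps : ∀ (σ : ↥E ≃ₐ[L] ↥E) i, φ l ((σ ⟨α0 i, hα0E i⟩ : K) - α0 i) = 0 := by
    intro σ i
    obtain ⟨y, hy⟩ := hΓL _ (haΓ i)
    rw [map_sub, hα0, hlift, ← hcomm, hα0, ← hy, AlgEquiv.commutes, sub_self]
  have hsE : ∀ v : Fin r → K, (∀ i, φ l (v i) = 0) → ∃ σ : ↥E ≃ₐ[L] ↥E,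
      (∀ x : ↥E, φ l (x : K) = 0 → σ x = x) ∧ ∀ i, (σ ⟨α0 i, hα0E i⟩ : K) - α0 i = v i := by
    intro v hv
    obtain ⟨σ, hσ, hσv⟩ := hsurj α0 hα0 v hv
    have hc : ∀ x : ↥E, ((σ.restrictNormal E x : ↥E) : K) = σ x :=
      fun x => AlgEquiv.restrictNormal_commutes σ E x
    refine ⟨σ.restrictNormal E, fun x hx => ?_, fun i => ?_⟩
    · apply Subtype.ext
      rw [hc, hσ _ hx]
    · rw [hc]; exact hσv i
  refine ⟨fun i => ⟨α0 i, hα0E i⟩, hα0, ?_, ?_, ?_, ?_, ?_⟩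
  · intro σ τ hσ hτ i
    have hm := hmaps τ i
    have h1 := congrArg (Subtype.val) (hσ ⟨_, hVE _ hm⟩ hm)
    rw [hlift] at h1
    simp only [map_sub] at h1
    rw [AlgEquiv.mul_apply, hlift σ (τ _), hlift σ]
    simp only
    linear_combination h1
  · intro f σ hσ
    exact hsE _ fun i => by rw [DK.phi_comm, hmaps, map_zero]
  · intro σ hσ i
    exact hmaps σ i
  · intro σ hσ τ hτ hστ
    have hα : ∀ i, (σ ⟨α0 i, hα0E i⟩ : K) = τ ⟨α0 i, hα0E i⟩ := by
      intro i
      have := congrFun hστ i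
      simpa using this
    have hag : ∀ x : K, φ l x ∈ Γ → σ.liftNormal K x = τ.liftNormal K x := by
      intro x hx
      obtain ⟨g, hg⟩ := hgen _ hx
      have h0 : φ l (x - ∑ i, φ (g i) (α0 i)) = 0 := by
        rw [map_sub, hg, map_sum, sub_eq_zero]
        exact Finset.sum_congr rfl fun i _ => by rw [DK.phi_comm, hα0]
      have h1 := congrArg (Subtype.val) (hσ ⟨_, hVE _ h0⟩ h0)
      have h2 := congrArg (Subtype.val) (hτ ⟨_, hVE _ h0⟩ h0)
      rw [hlift] at h1 h2
      have h3 := h1.trans h2.symm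
      simp only [map_sub, map_sum, hcomm] at h3
      have h4 : ∑ i, φ (g i) (σ.liftNormal K (α0 i)) = ∑ i, φ (g i) (τ.liftNormal K (α0 i)) := by
        refine Finset.sum_congr rfl fun i _ => ?_
        have := hα i
        rw [hlift, hlift] at this
        rw [this]
      rw [h4] at h3
      exact sub_left_injective h3
    have hhom : E.val.comp (σ : ↥E →ₐ[L] ↥E) = E.val.comp (τ : ↥E →ₐ[L] ↥E) := by
      refine IntermediateField.algHom_ext_of_eq_adjoin L hE ?_
      intro x hx
      have := hag x hx
      show (σ _ : K) = (τ _ : K)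
      rw [hlift, hlift]
      exact this
    apply AlgEquiv.ext
    intro x
    exact Subtype.ext (DFunLike.congr_fun hhom x)
  · intro v hv
    obtain ⟨σ, hσ, hσv⟩ := hsE v hv
    exact ⟨σ, hσ, funext hσv⟩

end Final

/-- **Main theorem of Section 3 (after [Denis, Theorem 5]).**
Let `φ` be a rank one Drinfeld `A`-module over a finite extension `L` of `k = 𝔽_q(T)`
and let `Γ` be a free `A`-submodule of `(L,+)` of rank `r` with basis `{a_1, …, a_r}`.
Then for all but finitely many monic irreducible polynomials `l` of `A`, the elements
`a_1, …, a_r` are linearly independent modulo `φ_l(L)` over `A/lA`, and consequently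
`H_Γ(l) = Gal(L(Λ_l^φ, (1/l)Γ)/L(Λ_l^φ))` is isomorphic as an `A`-module to the direct
product `Λ_l^φ × ⋯ × Λ_l^φ` of `r` copies of `Λ_l^φ` (via `σ ↦ (σ(α_i) - α_i)_i` for
roots `α_i` of `φ_l(u) = a_i`). -/
theorem drinfeld_kummer_full_for_almost_all_primes
    {Fq : Type} [Field Fq] [Fintype Fq]
    (L : IntermediateField (RatFunc Fq) (AlgebraicClosure (RatFunc Fq)))
    [FiniteDimensional (RatFunc Fq) (↥L)]
    (φ : Polynomial Fq →+* AddMonoid.End (AlgebraicClosure (RatFunc Fq)))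
    (hφ : IsDrinfeldRankOne L φ)
    -- Γ : a free A-submodule of (L, +) of rank r with basis a_1, …, a_r
    (Γ : AddSubgroup (AlgebraicClosure (RatFunc Fq)))
    (hΓL : ∀ x ∈ Γ, x ∈ L)
    (hΓA : ∀ (f : Polynomial Fq), ∀ x ∈ Γ, φ f x ∈ Γ)
    (r : ℕ) (a : Fin r → AlgebraicClosure (RatFunc Fq))
    (haΓ : ∀ i, a i ∈ Γ)
    (hgen : ∀ x ∈ Γ, ∃ g : Fin r → Polynomial Fq, x = ∑ i, φ (g i) (a i))
    (hind : ∀ g : Fin r → Polynomial Fq, ∑ i, φ (g i) (a i) = 0 → ∀ i, g i = 0) :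
    ∃ S : Finset (Polynomial Fq),
      ∀ l : Polynomial Fq, l.Monic → Irreducible l → l ∉ S →
        -- (a) a_1, …, a_r are linearly independent modulo φ_l(L) over A/lA
        (∀ g : Fin r → Polynomial Fq,
          (∃ w : AlgebraicClosure (RatFunc Fq), w ∈ L ∧
            φ l w = ∑ i, φ (g i) (a i)) →
          ∀ i, l ∣ g i) ∧
        -- (b) H_Γ(l) ≅ Λ_l^φ × ⋯ × Λ_l^φ (r copies) as A-modules, via
        -- σ ↦ (σ(α_1) - α_1, …, σ(α_r) - α_r)
        (∀ E : IntermediateField (↥L) (AlgebraicClosure (RatFunc Fq)),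
          E = IntermediateField.adjoin (↥L) {x | φ l x ∈ Γ} →
          ∃ α : Fin r → ↥E,
            (∀ i, φ l ((α i : AlgebraicClosure (RatFunc Fq))) = a i) ∧
            -- the map is additive,
            (∀ σ τ : ↥E ≃ₐ[↥L] ↥E,
              (∀ x : ↥E, φ l (x : AlgebraicClosure (RatFunc Fq)) = 0 → σ x = x) →
              (∀ x : ↥E, φ l (x : AlgebraicClosure (RatFunc Fq)) = 0 → τ x = x) →
              ∀ i, ((σ * τ) (α i) : AlgebraicClosure (RatFunc Fq))
                  - (α i : AlgebraicClosure (RatFunc Fq))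
                = ((σ (α i) : AlgebraicClosure (RatFunc Fq))
                    - (α i : AlgebraicClosure (RatFunc Fq)))
                  + ((τ (α i) : AlgebraicClosure (RatFunc Fq))
                    - (α i : AlgebraicClosure (RatFunc Fq)))) ∧
            -- compatible with the A-module structures (the image of H_Γ(l) is stable
            -- under the diagonal Carlitz–Drinfeld action, matching the natural
            -- A-action on H_Γ(l)),
            (∀ (f : Polynomial Fq) (σ : ↥E ≃ₐ[↥L] ↥E),
              (∀ x : ↥E, φ l (x : AlgebraicClosure (RatFunc Fq)) = 0 → σ x = x) →
              ∃ τ : ↥E ≃ₐ[↥L] ↥E,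
                (∀ x : ↥E, φ l (x : AlgebraicClosure (RatFunc Fq)) = 0 → τ x = x) ∧
                ∀ i, (τ (α i) : AlgebraicClosure (RatFunc Fq))
                    - (α i : AlgebraicClosure (RatFunc Fq))
                  = φ f ((σ (α i) : AlgebraicClosure (RatFunc Fq))
                      - (α i : AlgebraicClosure (RatFunc Fq)))) ∧
            -- and a bijection from H_Γ(l) onto Λ_l^φ × ⋯ × Λ_l^φ (r copies)
            Set.BijOn
              (fun σ : ↥E ≃ₐ[↥L] ↥E =>
                fun i => (σ (α i) : AlgebraicClosure (RatFunc Fq))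
                  - (α i : AlgebraicClosure (RatFunc Fq)))
              {σ : ↥E ≃ₐ[↥L] ↥E |
                ∀ x : ↥E, φ l (x : AlgebraicClosure (RatFunc Fq)) = 0 → σ x = x}
              {v : Fin r → AlgebraicClosure (RatFunc Fq) | ∀ i, φ l (v i) = 0}) := by
  classical
  obtain ⟨a0, ha0L, ha00, hX, hC⟩ := hφ
  have hq : 0 < Fintype.card Fq - 1 := by
    have := Fintype.one_lt_card (α := Fq); omega
  obtain ⟨b, hb⟩ := IsAlgClosed.exists_pow_nat_eq a0 hq
  have hb0 : b ≠ 0 := by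
    rintro rfl
    rw [zero_pow hq.ne'] at hb
    exact ha00 hb.symm
  have hcar : DK.Car φ a0 := by
    refine ⟨fun x => ?_, fun c x => ?_⟩
    · rw [hX, IsScalarTower.algebraMap_apply (Polynomial Fq) (RatFunc Fq), RatFunc.algebraMap_X]
    · rw [hC, IsScalarTower.algebraMap_apply (Polynomial Fq) (RatFunc Fq), RatFunc.algebraMap_C]
  have hinjk : Function.Injective (algebraMap (Polynomial Fq) (RatFunc Fq)) :=
    IsFractionRing.injective _ _
  have hinjK : Function.Injective (algebraMap (Polynomial Fq) (AlgebraicClosure (RatFunc Fq))) := by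
    rw [IsScalarTower.algebraMap_eq (Polynomial Fq) (RatFunc Fq)]
    exact (algebraMap (RatFunc Fq) (AlgebraicClosure (RatFunc Fq))).injective.comp hinjk
  have hstL : IsScalarTower (Polynomial Fq) (↥L) (AlgebraicClosure (RatFunc Fq)) :=
    IsScalarTower.of_algebraMap_eq fun x => by
      rw [IsScalarTower.algebraMap_apply (Polynomial Fq) (RatFunc Fq) (AlgebraicClosure (RatFunc Fq)),
        IsScalarTower.algebraMap_apply (Polynomial Fq) (RatFunc Fq) (↥L)]
      rfl
  have hinjL : Function.Injective (algebraMap (Polynomial Fq) (↥L)) := by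
    have := hinjK
    rw [IsScalarTower.algebraMap_eq (Polynomial Fq) (↥L), RingHom.coe_comp] at this
    exact Function.Injective.of_comp this
  have hcar' : DK.Car φ (algebraMap (↥L) (AlgebraicClosure (RatFunc Fq)) ⟨a0, ha0L⟩) := hcar
  have hLalg : Algebra.IsAlgebraic (↥L) (AlgebraicClosure (RatFunc Fq)) :=
    Algebra.IsAlgebraic.tower_top (K := RatFunc Fq) (↥L)
  have hnorm : Normal (↥L) (AlgebraicClosure (RatFunc Fq)) :=
    Normal.tower_top_of_normal (RatFunc Fq) (↥L) _
  obtain ⟨M, hM⟩ := DK.partA L hcar hb hb0 Γ hΓL hΓA r a haΓ hgen hind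
  let m := Module.finrank (RatFunc Fq) (↥L) * (minpoly (↥L) b).natDegree
  refine ⟨(DK.finite_deg Fq (M + m ^ 2 + 2)).toFinset, fun l hl hi hlS => ?_⟩
  have hdeg : M + m ^ 2 + 2 < l.natDegree := by
    rw [Set.Finite.mem_toFinset] at hlS
    exact not_le.1 hlS
  have hA := hM l hl hi (by omega)
  refine ⟨hA, fun E hE => ?_⟩
  obtain ⟨u, huQ, hu, hu0⟩ := DK.exists_u0 hinjK hcar hb hb0 l hl hi
  have hcyc := DK.cyc hcar hb hb0 l hl hi u hu hu0
  have hbd := DK.degbound (L := (↥L)) l hl hi b u huQ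
  have hlt : l.natDegree < Fintype.card Fq ^ l.natDegree :=
    Nat.lt_pow_self (Fintype.one_lt_card (α := Fq))
  have hbig := DK.arith _ _ _ hbd (by change m ^ 2 + 2 ≤ _; omega)
  refine DK.partB hcar' hinjL Γ (fun x hx => ⟨⟨x, hΓL x hx⟩, rfl⟩) r a haΓ hgen l hi ?_ E hE
  intro α hα v hv
  refine DK.core hcar' hinjL l hl hi u hu hu0 hcyc hbig α
    (fun i => ⟨a i, hΓL _ (haΓ i)⟩) hα ?_ v hv
  rintro g ⟨w, hw⟩
  exact hA g ⟨w, w.2, hw⟩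
end
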